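/- arXiv:2108.02857 — 2 statements merged into one kernel-verified Lean document; each statement's English description precedes it below -/
import Mathlib

section
/- Let (Δₙ)_{n≥1} be a sequence of positive meshes with Δₙ → 0 and nΔₙ → ∞ as n → ∞. For every θ > 0 there exist a constant c(θ) > 0 and n₀ ∈ ℕ, such that for all n ≥ n₀, d_Kol( Ỹ₁₂(n)/√Tₙ, N(0, 1/(4θ³)) ) ≤ c(θ) · ln(nΔₙ) · max( (nΔₙ)^{−1/2}, (nΔₙ²)^{1/3} ). In particular, if additionally nΔₙ² → 0, then Ỹ₁₂(n)/√Tₙ converges in distribution to N(0, 1/(4θ³)) as n → ∞. -/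
open MeasureTheory ProbabilityTheory Real Filter Finset
open scoped Topology ENNReal NNReal

noncomputable section

/-- Kolmogorov distance between two Borel measures on `ℝ`. -/
def dKol (μ ν : Measure ℝ) : ℝ :=
  ⨆ z : ℝ, |(μ (Set.Iic z)).toReal - (ν (Set.Iic z)).toReal|

/-- `X 0, X 1 : ℝ → Ω → ℝ` is a pair of independent centered Gaussian processes,
started at `0`, with almost surely continuous paths on `[0,∞)` and the
Ornstein–Uhlenbeck covariance `E[Xᵢ(s)Xᵢ(t)] = (e^{−θ|t−s|} − e^{−θ(t+s)})/(2θ)`. -/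
structure IsOUPair {Ω : Type} [MeasureSpace Ω] (θ : ℝ) (X : Fin 2 → ℝ → Ω → ℝ) : Prop where
  meas : ∀ i t, Measurable (X i t)
  gaussian : ∀ (i : Fin 2) (n : ℕ) (t : Fin n → ℝ) (c : Fin n → ℝ), (∀ j, 0 ≤ t j) →
      ∃ v : NNReal, Measure.map (fun ω => ∑ j, c j * X i (t j) ω) ℙ = gaussianReal 0 v
  indep : IndepFun (fun ω t => X 0 t ω) (fun ω t => X 1 t ω) ℙ
  cont : ∀ᵐ ω ∂(ℙ : Measure Ω), ∀ i, ContinuousOn (fun t => X i t ω) (Set.Ici 0)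
  init : ∀ i ω, X i 0 ω = 0
  cov : ∀ (i : Fin 2) (s t : ℝ), 0 ≤ s → 0 ≤ t →
      ∫ ω, X i s ω * X i t ω ∂ℙ
        = (Real.exp (-θ * |t - s|) - Real.exp (-θ * (t + s))) / (2 * θ)

variable {Ω : Type} [MeasureSpace Ω]

/-- `F_T := T^{-1/2} ∫₀^T X₁(u) X₂(u) du`. -/
def ouF (X : Fin 2 → ℝ → Ω → ℝ) (T : ℝ) (ω : Ω) : ℝ :=
  (1 / Real.sqrt T) * ∫ u in (0:ℝ)..T, X 0 u ω * X 1 u ω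

/-- `X̄ᵢ(T) := T^{-1} ∫₀^T Xᵢ(u) du`. -/
def ouXbar (X : Fin 2 → ℝ → Ω → ℝ) (i : Fin 2) (T : ℝ) (ω : Ω) : ℝ :=
  (1 / T) * ∫ u in (0:ℝ)..T, X i u ω

/-- `Y_{ij}(T) := ∫₀^T Xᵢ(u)Xⱼ(u) du − T·X̄ᵢ(T)·X̄ⱼ(T)`. -/
def ouY (X : Fin 2 → ℝ → Ω → ℝ) (i j : Fin 2) (T : ℝ) (ω : Ω) : ℝ :=
  (∫ u in (0:ℝ)..T, X i u ω * X j u ω) - T * ouXbar X i T ω * ouXbar X j T ω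

/-- Yule's nonsense correlation `ρ(T)`. -/
def ouRho (X : Fin 2 → ℝ → Ω → ℝ) (T : ℝ) (ω : Ω) : ℝ :=
  ouY X 0 1 T ω / Real.sqrt (ouY X 0 0 T ω * ouY X 1 1 T ω)

/-- `A(n) := (√Tₙ/n) Σ_{k<n} X₁(kΔ)X₂(kΔ)` with `Tₙ = nΔ`. -/
def ouA (X : Fin 2 → ℝ → Ω → ℝ) (n : ℕ) (Δ : ℝ) (ω : Ω) : ℝ :=
  (Real.sqrt (n * Δ) / n) * ∑ k ∈ Finset.range n, X 0 (k * Δ) ω * X 1 (k * Δ) ω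

/-- `X̃ᵢ(n) := n^{-1} Σ_{k<n} Xᵢ(kΔ)`. -/
def ouXtilde (X : Fin 2 → ℝ → Ω → ℝ) (i : Fin 2) (n : ℕ) (Δ : ℝ) (ω : Ω) : ℝ :=
  (1 / n) * ∑ k ∈ Finset.range n, X i (k * Δ) ω

/-- `Ỹ_{ij}(n) := Δ Σ_{k<n} Xᵢ(kΔ)Xⱼ(kΔ) − Tₙ·X̃ᵢ(n)·X̃ⱼ(n)` with `Tₙ = nΔ`. -/
def ouYtilde (X : Fin 2 → ℝ → Ω → ℝ) (i j : Fin 2) (n : ℕ) (Δ : ℝ) (ω : Ω) : ℝ :=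
  Δ * ∑ k ∈ Finset.range n, X i (k * Δ) ω * X j (k * Δ) ω
    - (n * Δ) * ouXtilde X i n Δ ω * ouXtilde X j n Δ ω

/-- Yule's discrete nonsense correlation `ρ̃(n)`. -/
def ouRhoTilde (X : Fin 2 → ℝ → Ω → ℝ) (n : ℕ) (Δ : ℝ) (ω : Ω) : ℝ :=
  ouYtilde X 0 1 n Δ ω / Real.sqrt (ouYtilde X 0 0 n Δ ω * ouYtilde X 1 1 n Δ ω)

/-!
Condition on the second process: given `X 1` on the grid, `Ỹ₁₂(n) / √Tₙ` is a linear form in the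
Gaussian vector `X 0 (k Δₙ)` with weights proportional to the centered observations of `X 1`, so it
is centered Gaussian with a random variance `V`. Hence its Kolmogorov distance to `N(0, w)` is at
most `2 / w * E|V - w|`. Since `V` is a quadratic form in a Gaussian vector, Isserlis' formula
bounds its fluctuations by the entries and row sums of the grid covariance, and its mean is close to
`w = 1 / (4 θ³)` because the sum of the squared covariances is a geometric sum.
-/

section

open scoped Matrix

/-! ### Gaussian moments -/

section GaussianMoments

lemma integrable_pow_gaussianReal (μ : ℝ) (v : ℝ≥0) (n : ℕ) :
    Integrable (fun x ↦ x ^ n) (gaussianReal μ v) :=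
  integrable_pow_of_mem_interior_integrableExpSet (by simp) n

lemma hasDerivAt_gaussianPDFReal (μ : ℝ) (v : ℝ≥0) (x : ℝ) :
    HasDerivAt (gaussianPDFReal μ v) (-((x - μ) / v) * gaussianPDFReal μ v x) x := by
  have h : HasDerivAt (fun x : ℝ ↦ -(x - μ) ^ 2 / (2 * v)) (-((x - μ) / v)) x := by
    refine ((((hasDerivAt_id x).sub_const μ).pow 2).neg.div_const (2 * (v : ℝ))).congr_deriv ?_
    rw [id, pow_one, mul_one, Nat.cast_ofNat, neg_div, mul_div_mul_left _ _ two_ne_zero]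
  refine (h.exp.const_mul (√(2 * π * v))⁻¹).congr_deriv ?_
  rw [gaussianPDFReal]
  ring

/-- Integration by parts against the density, whose logarithmic derivative is `-x / v`. -/
lemma integral_pow_add_two_gaussianReal (v : ℝ≥0) (n : ℕ) :
    ∫ x, x ^ (n + 2) ∂gaussianReal 0 v = (n + 1) * v * ∫ x, x ^ n ∂gaussianReal 0 v := by
  rcases eq_or_ne v 0 with rfl | hv
  · simp
  have hint (k : ℕ) : Integrable fun x ↦ x ^ k * gaussianPDFReal 0 v x := by
    have h := integrable_pow_gaussianReal 0 v k
    rw [gaussianReal_of_var_ne_zero 0 hv, integrable_withDensity_iff_integrable_smul'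
      (measurable_gaussianPDF 0 v) (ae_of_all _ fun _ ↦ gaussianPDF_lt_top)] at h
    simpa only [toReal_gaussianPDF, smul_eq_mul, mul_comm] using h
  have hparts := integral_mul_deriv_eq_deriv_mul_of_integrable
    (fun x _ ↦ hasDerivAt_pow (n + 1) x) (fun x _ ↦ hasDerivAt_gaussianPDFReal 0 v x)
    (((hint (n + 2)).const_mul (-(v : ℝ)⁻¹)).congr (ae_of_all _ fun x ↦ by
      simp only [Pi.mul_apply]; ring))
    (((hint n).const_mul (n + 1)).congr (ae_of_all _ fun x ↦ by simp [mul_assoc]))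
    (hint (n + 1))
  have hpow (k : ℕ) : ∫ x, x ^ k ∂gaussianReal 0 v = ∫ x, x ^ k * gaussianPDFReal 0 v x := by
    simp only [integral_gaussianReal_eq_integral_smul hv, smul_eq_mul, mul_comm]
  have hleft (x : ℝ) : x ^ (n + 1) * (-((x - 0) / v) * gaussianPDFReal 0 v x)
      = -(v : ℝ)⁻¹ * (x ^ (n + 2) * gaussianPDFReal 0 v x) := by ring
  simp only [hleft, Nat.cast_add, Nat.cast_one, Nat.add_sub_cancel, mul_assoc, integral_const_mul,
    ← hpow] at hparts
  have hv' : (v : ℝ) ≠ 0 := NNReal.coe_ne_zero.2 hv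
  field_simp at hparts
  linarith

lemma integral_pow_four_gaussianReal (v : ℝ≥0) : ∫ x, x ^ 4 ∂gaussianReal 0 v = 3 * v ^ 2 := by
  have h2 := integral_pow_add_two_gaussianReal v 0
  have h4 := integral_pow_add_two_gaussianReal v 2
  simp only [pow_zero, integral_const, probReal_univ, smul_eq_mul, mul_one] at h2
  rw [h4, h2]
  push_cast
  ring

end GaussianMoments

/-! ### Centered Gaussian vectors -/

section GaussianProducts

variable {α : Type*} {mα : MeasurableSpace α} {μ : Measure α} {U V : α → ℝ}

lemma memLp_mul_of_hasGaussianLaw (hU : HasGaussianLaw U μ) (hV : HasGaussianLaw V μ) :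
    MemLp (fun ω ↦ U ω * V ω) 2 μ :=
  have : ENNReal.HolderTriple 4 4 2 := ⟨by
    rw [show (4 : ℝ≥0∞) = 2 * 2 by norm_num, ENNReal.mul_inv (by simp) (by simp), ← mul_add,
      ENNReal.inv_two_add_inv_two, mul_one]⟩
  (hV.memLp (p := 4) (by simp)).mul (hU.memLp (p := 4) (by simp))

lemma memLp_sq_of_hasGaussianLaw (hU : HasGaussianLaw U μ) : MemLp (fun ω ↦ U ω ^ 2) 2 μ := by
  simpa only [sq] using memLp_mul_of_hasGaussianLaw hU hU

lemma integrable_pow_four_of_hasGaussianLaw (hU : HasGaussianLaw U μ) :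
    Integrable (fun ω ↦ U ω ^ 4) μ := by
  simpa only [← pow_mul] using (memLp_sq_of_hasGaussianLaw hU).integrable_sq

lemma integral_sq_of_hasGaussianLaw (hU : HasGaussianLaw U μ) (hU0 : μ[U] = 0) :
    ∫ ω, U ω ^ 2 ∂μ = Var[U; μ] :=
  (variance_of_integral_eq_zero hU.aemeasurable hU0).symm

lemma integral_pow_four_of_hasGaussianLaw (hU : HasGaussianLaw U μ) (hU0 : μ[U] = 0) :
    ∫ ω, U ω ^ 4 ∂μ = 3 * Var[U; μ] ^ 2 := by
  rw [← integral_map (f := (· ^ 4)) hU.aemeasurable (by fun_prop), hU.map_eq_gaussianReal, hU0,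
    integral_pow_four_gaussianReal, Real.coe_toNNReal _ (variance_nonneg U μ)]

/-- Polarization: `(U + V) ^ 4 + (U - V) ^ 4 = 2 * U ^ 4 + 12 * U ^ 2 * V ^ 2 + 2 * V ^ 4`. -/
lemma covariance_sq_sq_of_hasGaussianLaw
    (hUV : HasGaussianLaw (fun ω ↦ (U ω, V ω)) μ) (hU0 : μ[U] = 0) (hV0 : μ[V] = 0) :
    cov[fun ω ↦ U ω ^ 2, fun ω ↦ V ω ^ 2; μ] = 2 * cov[U, V; μ] ^ 2 := by
  have := hUV.isProbabilityMeasure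
  have hU := hUV.fst
  have hV := hUV.snd
  have hadd : HasGaussianLaw (U + V) μ := hUV.add
  have hsub : HasGaussianLaw (U - V) μ := hUV.sub
  have hadd4 := integral_pow_four_of_hasGaussianLaw hadd
    (by simp [integral_add hU.integrable hV.integrable, hU0, hV0])
  have hsub4 := integral_pow_four_of_hasGaussianLaw hsub
    (by simp [integral_sub hU.integrable hV.integrable, hU0, hV0])
  have hU4 := integral_pow_four_of_hasGaussianLaw hU hU0
  have hV4 := integral_pow_four_of_hasGaussianLaw hV hV0
  have hU2 := memLp_sq_of_hasGaussianLaw hU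
  have hV2 := memLp_sq_of_hasGaussianLaw hV
  have hU4i := integrable_pow_four_of_hasGaussianLaw hU
  have hV4i := integrable_pow_four_of_hasGaussianLaw hV
  have hprod : Integrable (fun ω ↦ U ω ^ 2 * V ω ^ 2) μ := hU2.integrable_mul hV2
  have hpolar : ∫ ω, (U + V) ω ^ 4 + (U - V) ω ^ 4 ∂μ
      = ∫ ω, 2 * U ω ^ 4 + 2 * V ω ^ 4 + 12 * (U ω ^ 2 * V ω ^ 2) ∂μ := by
    congr 1 with ω
    simp only [Pi.add_apply, Pi.sub_apply]
    ring
  rw [integral_add (integrable_pow_four_of_hasGaussianLaw hadd)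
    (integrable_pow_four_of_hasGaussianLaw hsub), hadd4, hsub4,
    integral_add ((hU4i.const_mul 2).fun_add (hV4i.const_mul 2)) (hprod.const_mul 12),
    integral_add (hU4i.const_mul 2) (hV4i.const_mul 2)] at hpolar
  simp only [integral_const_mul, hU4, hV4, variance_add hU.memLp_two hV.memLp_two,
    variance_sub hU.memLp_two hV.memLp_two] at hpolar
  rw [covariance_eq_sub hU2 hV2, integral_sq_of_hasGaussianLaw hU hU0,
    integral_sq_of_hasGaussianLaw hV hV0]
  simp only [Pi.mul_apply]
  linarith

end GaussianProducts

/-- The family `x` is a centered Gaussian vector with covariance matrix `r` under `μ`. The joint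
law is taken on the function space `ι → ℝ`, so `x` may be degenerate (`r` singular). -/
structure IsCenteredGaussian {ι α : Type*} [Fintype ι] {mα : MeasurableSpace α} (x : ι → α → ℝ)
    (r : Matrix ι ι ℝ) (μ : Measure α) : Prop where
  hasGaussianLaw : HasGaussianLaw (fun ω k ↦ x k ω) μ
  integral_eq_zero : ∀ k, μ[x k] = 0
  covariance_eq : ∀ k l, cov[x k, x l; μ] = r k l

namespace IsCenteredGaussian

variable {ι α : Type*} [Fintype ι] {mα : MeasurableSpace α} {μ : Measure α} {x : ι → α → ℝ}
  {r : Matrix ι ι ℝ}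

lemma of_map_dotProduct (hx : ∀ k, AEMeasurable (x k) μ)
    (hmap : ∀ c : ι → ℝ, ∃ v, μ.map (fun ω ↦ c ⬝ᵥ (x · ω)) = gaussianReal 0 v)
    (hmul : ∀ k l, ∫ ω, x k ω * x l ω ∂μ = r k l) : IsCenteredGaussian x r μ := by
  have hjoint : HasGaussianLaw (fun ω k ↦ x k ω) μ := by
    classical
    refine ⟨isGaussian_of_map_eq_gaussianReal fun L ↦ ?_⟩
    obtain ⟨v, hv⟩ := hmap fun k ↦ L (Pi.single k 1)
    refine ⟨0, v, ?_⟩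
    rw [AEMeasurable.map_map_of_aemeasurable (by fun_prop) (aemeasurable_pi_lambda _ hx), ← hv]
    congr 1 with ω
    simp only [Function.comp_apply, dotProduct, mul_comm (L _), ← smul_eq_mul, ← map_smul,
      ← map_sum, ← pi_eq_sum_univ']
  have hmean (k : ι) : μ[x k] = 0 := by
    classical
    obtain ⟨v, hv⟩ := hmap (Pi.single k 1)
    simp only [single_one_dotProduct] at hv
    rw [← integral_id_gaussianReal (μ := 0) (v := v), ← hv, integral_map (hx k) (by fun_prop)]
  have := hjoint.isProbabilityMeasure
  refine ⟨hjoint, hmean, fun k l ↦ ?_⟩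
  have h := covariance_eq_sub (hjoint.eval k).memLp_two (hjoint.eval l).memLp_two
  rw [hmean k, zero_mul, sub_zero] at h
  exact h.trans (hmul k l)

lemma isProbabilityMeasure (hx : IsCenteredGaussian x r μ) : IsProbabilityMeasure μ :=
  hx.hasGaussianLaw.isProbabilityMeasure

lemma hasGaussianLaw_apply (hx : IsCenteredGaussian x r μ) (k : ι) : HasGaussianLaw (x k) μ :=
  hx.hasGaussianLaw.eval k

lemma memLp_two (hx : IsCenteredGaussian x r μ) (k : ι) : MemLp (x k) 2 μ :=
  (hx.hasGaussianLaw_apply k).memLp_two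

lemma memLp_two_mul (hx : IsCenteredGaussian x r μ) (k l : ι) :
    MemLp (fun ω ↦ x k ω * x l ω) 2 μ :=
  memLp_mul_of_hasGaussianLaw (hx.hasGaussianLaw_apply k) (hx.hasGaussianLaw_apply l)

lemma integrable_mul (hx : IsCenteredGaussian x r μ) (k l : ι) :
    Integrable (fun ω ↦ x k ω * x l ω) μ :=
  (hx.memLp_two k).integrable_mul (hx.memLp_two l)

lemma integral_mul (hx : IsCenteredGaussian x r μ) (k l : ι) :
    ∫ ω, x k ω * x l ω ∂μ = r k l := by
  have := hx.isProbabilityMeasure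
  have h := covariance_eq_sub (hx.memLp_two k) (hx.memLp_two l)
  rw [hx.integral_eq_zero k, zero_mul, sub_zero, hx.covariance_eq] at h
  exact h.symm

lemma comm (hx : IsCenteredGaussian x r μ) (k l : ι) : r k l = r l k := by
  rw [← hx.covariance_eq, covariance_comm, hx.covariance_eq]

lemma covariance_sq_add_mul_sq_add_mul (hx : IsCenteredGaussian x r μ) (i j k l : ι) (a b : ℝ) :
    cov[fun ω ↦ (x i ω + a * x j ω) ^ 2, fun ω ↦ (x k ω + b * x l ω) ^ 2; μ]
      = 2 * (r i k + b * r i l + a * (r j k + b * r j l)) ^ 2 := by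
  have := hx.isProbabilityMeasure
  let p := ContinuousLinearMap.proj (R := ℝ) (φ := fun _ : ι ↦ ℝ)
  have hgauss : HasGaussianLaw (fun ω ↦ (x i ω + a * x j ω, x k ω + b * x l ω)) μ :=
    hx.hasGaussianLaw.map_fun ((p i + a • p j).prod (p k + b • p l))
  have hL (i : ι) (a : ℝ) : MemLp (fun ω ↦ a * x i ω) 2 μ := (hx.memLp_two i).const_mul a
  have hmean (i j : ι) (a : ℝ) : ∫ ω, x i ω + a * x j ω ∂μ = 0 := by
    rw [integral_add (hx.hasGaussianLaw_apply i).integrable ((hL j a).integrable one_le_two),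
      integral_const_mul, hx.integral_eq_zero, hx.integral_eq_zero, mul_zero, add_zero]
  rw [covariance_sq_sq_of_hasGaussianLaw hgauss (hmean i j a) (hmean k l b)]
  congr 2
  have hright (i : ι) : cov[x i, (fun ω ↦ x k ω + b * x l ω); μ] = r i k + b * r i l := by
    rw [← hx.covariance_eq, ← hx.covariance_eq, ← covariance_const_mul_right]
    exact covariance_add_right (hx.memLp_two i) (hx.memLp_two k) (hL l b)
  rw [← hright, ← hright, ← covariance_const_mul_left]
  exact covariance_add_left (hx.memLp_two i) (hL j a) ((hx.memLp_two k).add (hL l b))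

/-- Isserlis' formula, obtained by polarizing both products into differences of squares. -/
lemma covariance_mul_mul (hx : IsCenteredGaussian x r μ) (i j k l : ι) :
    cov[fun ω ↦ x i ω * x j ω, fun ω ↦ x k ω * x l ω; μ] = r i k * r j l + r i l * r j k := by
  have := hx.isProbabilityMeasure
  have hpolar (i j : ι) (ω : α) :
      x i ω * x j ω = 4⁻¹ * ((x i ω + 1 * x j ω) ^ 2 - (x i ω + -1 * x j ω) ^ 2) := by ring
  have hmem (i j : ι) (a : ℝ) : MemLp (fun ω ↦ (x i ω + a * x j ω) ^ 2) 2 μ := by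
    have hexpand (ω : α) : (x i ω + a * x j ω) ^ 2
        = x i ω * x i ω + 2 * a * (x i ω * x j ω) + a ^ 2 * (x j ω * x j ω) := by ring
    simp only [hexpand]
    exact ((hx.memLp_two_mul i i).add ((hx.memLp_two_mul i j).const_mul _)).add
      ((hx.memLp_two_mul j j).const_mul _)
  simp only [hpolar i j, hpolar k l, covariance_const_mul_left, covariance_const_mul_right]
  rw [covariance_fun_sub_fun_sub (hmem i j 1) (hmem i j (-1)) (hmem k l 1) (hmem k l (-1))]
  simp only [hx.covariance_sq_add_mul_sq_add_mul]
  ring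

end IsCenteredGaussian

lemma abs_dotProduct_mulVec_le {ι : Type*} [Fintype ι] {r : Matrix ι ι ℝ} {c : ι → ℝ} {K M : ℝ}
    (hr : ∀ k, ∑ l, |r k l| ≤ K) (hc : ∀ k, |c k| ≤ M) :
    |c ⬝ᵥ r *ᵥ c| ≤ Fintype.card ι * (K * M ^ 2) := by
  have hterm (k l : ι) : |c k * (r k l * c l)| ≤ |r k l| * M ^ 2 := by
    have hM := (abs_nonneg _).trans (hc k)
    calc |c k * (r k l * c l)| = |r k l| * (|c k| * |c l|) := by
          rw [abs_mul, abs_mul]; ring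
      _ ≤ |r k l| * M ^ 2 := by
          rw [sq]
          gcongr
          exacts [hc k, hc l]
  calc |c ⬝ᵥ r *ᵥ c| = |∑ k, ∑ l, c k * (r k l * c l)| := by
        simp only [dotProduct, Matrix.mulVec, mul_sum]
    _ ≤ ∑ k, ∑ l, |c k * (r k l * c l)| :=
        (abs_sum_le_sum_abs _ _).trans (sum_le_sum fun _ _ ↦ abs_sum_le_sum_abs _ _)
    _ ≤ ∑ k, ∑ l, |r k l| * M ^ 2 := sum_le_sum fun k _ ↦ sum_le_sum fun l _ ↦ hterm k l
    _ ≤ ∑ _k : ι, K * M ^ 2 := by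
        simp only [← sum_mul]
        gcongr with k
        exact hr k
    _ = Fintype.card ι * (K * M ^ 2) := by simp

lemma dotProduct_mulVec_self_eq_sum {ι : Type*} [Fintype ι] (A : Matrix ι ι ℝ) (y : ι → ℝ) :
    y ⬝ᵥ A *ᵥ y = ∑ p : ι × ι, A p.1 p.2 * (y p.1 * y p.2) := by
  simp only [dotProduct, Matrix.mulVec, mul_sum, Fintype.sum_prod_type]
  exact sum_congr rfl fun k _ ↦ sum_congr rfl fun l _ ↦ by ring

lemma integral_abs_sub_integral_le_sqrt_variance {α : Type*} {mα : MeasurableSpace α}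
    {μ : Measure α} [IsProbabilityMeasure μ] {Z : α → ℝ} (hZ : MemLp Z 2 μ) :
    ∫ ω, |Z ω - μ[Z]| ∂μ ≤ √(Var[Z; μ]) := by
  have hdev : MemLp (fun ω ↦ |Z ω - μ[Z]|) 2 μ := (hZ.sub (memLp_const _)).abs
  refine Real.le_sqrt_of_sq_le ?_
  have h := variance_nonneg (fun ω ↦ |Z ω - μ[Z]|) μ
  rw [variance_eq_sub hdev] at h
  simp only [Pi.pow_apply, sq_abs] at h
  rw [variance_eq_integral hZ.aemeasurable]
  linarith

namespace IsCenteredGaussian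

variable {ι α : Type*} [Fintype ι] {mα : MeasurableSpace α} {μ : Measure α} {x : ι → α → ℝ}
  {r : Matrix ι ι ℝ}

lemma hasGaussianLaw_dotProduct (hx : IsCenteredGaussian x r μ) (c : ι → ℝ) :
    HasGaussianLaw (fun ω ↦ c ⬝ᵥ (x · ω)) μ := by
  let L : (ι → ℝ) →L[ℝ] ℝ := ∑ k, c k • .proj k
  have hL (y : ι → ℝ) : L y = c ⬝ᵥ y := by simp [L, dotProduct]
  simpa only [hL] using hx.hasGaussianLaw.map_fun L

lemma integral_dotProduct (hx : IsCenteredGaussian x r μ) (c : ι → ℝ) :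
    ∫ ω, c ⬝ᵥ (x · ω) ∂μ = 0 := by
  change ∫ ω, ∑ k, c k * x k ω ∂μ = 0
  rw [integral_finsetSum _ fun k _ ↦ (hx.hasGaussianLaw_apply k).integrable.const_mul (c k)]
  simp only [integral_const_mul, hx.integral_eq_zero, mul_zero, sum_const_zero]

lemma variance_dotProduct (hx : IsCenteredGaussian x r μ) (c : ι → ℝ) :
    Var[fun ω ↦ c ⬝ᵥ (x · ω); μ] = c ⬝ᵥ r *ᵥ c := by
  have := hx.isProbabilityMeasure
  simp only [dotProduct, Matrix.mulVec, mul_sum]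
  rw [variance_fun_sum fun k ↦ (hx.memLp_two k).const_mul (c k)]
  simp only [covariance_const_mul_left, covariance_const_mul_right, hx.covariance_eq]
  exact sum_congr rfl fun k _ ↦ sum_congr rfl fun l _ ↦ by ring

lemma map_dotProduct (hx : IsCenteredGaussian x r μ) (c : ι → ℝ) :
    μ.map (fun ω ↦ c ⬝ᵥ (x · ω)) = gaussianReal 0 (c ⬝ᵥ r *ᵥ c).toNNReal := by
  rw [(hx.hasGaussianLaw_dotProduct c).map_eq_gaussianReal, hx.integral_dotProduct,
    hx.variance_dotProduct]

lemma integral_dotProduct_sq (hx : IsCenteredGaussian x r μ) (c : ι → ℝ) :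
    ∫ ω, (c ⬝ᵥ (x · ω)) ^ 2 ∂μ = c ⬝ᵥ r *ᵥ c := by
  rw [integral_sq_of_hasGaussianLaw (hx.hasGaussianLaw_dotProduct c) (hx.integral_dotProduct c),
    hx.variance_dotProduct]

lemma memLp_two_quadraticForm (hx : IsCenteredGaussian x r μ) (A : Matrix ι ι ℝ) :
    MemLp (fun ω ↦ (x · ω) ⬝ᵥ A *ᵥ (x · ω)) 2 μ := by
  simp only [dotProduct_mulVec_self_eq_sum]
  exact memLp_finsetSum _ fun p _ ↦ (hx.memLp_two_mul p.1 p.2).const_mul _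

lemma integral_quadraticForm (hx : IsCenteredGaussian x r μ) (A : Matrix ι ι ℝ) :
    ∫ ω, (x · ω) ⬝ᵥ A *ᵥ (x · ω) ∂μ = ∑ k, ∑ l, A k l * r k l := by
  simp only [dotProduct_mulVec_self_eq_sum]
  rw [integral_finsetSum _ fun p _ ↦ (hx.integrable_mul p.1 p.2).const_mul _]
  simp only [integral_const_mul, hx.integral_mul, Fintype.sum_prod_type]

lemma variance_quadraticForm (hx : IsCenteredGaussian x r μ) (A : Matrix ι ι ℝ) :
    Var[fun ω ↦ (x · ω) ⬝ᵥ A *ᵥ (x · ω); μ]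
      = ∑ k, ∑ l, ∑ m, ∑ p, A k l * A m p * (r k m * r l p + r k p * r l m) := by
  have := hx.isProbabilityMeasure
  simp only [dotProduct_mulVec_self_eq_sum]
  rw [variance_fun_sum (X := fun (p : ι × ι) ω ↦ A p.1 p.2 * (x p.1 ω * x p.2 ω))
    fun p ↦ (hx.memLp_two_mul p.1 p.2).const_mul _]
  simp only [covariance_const_mul_left, covariance_const_mul_right, hx.covariance_mul_mul,
    Fintype.sum_prod_type]
  exact sum_congr rfl fun k _ ↦ sum_congr rfl fun l _ ↦ sum_congr rfl fun m _ ↦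
    sum_congr rfl fun p _ ↦ by ring

end IsCenteredGaussian

/-- The deviations `y k - ȳ` of a finite sample `y` from its mean `ȳ`. -/
def center {ι : Type*} [Fintype ι] (y : ι → ℝ) : ι → ℝ :=
  fun k ↦ y k - (∑ l, y l) / Fintype.card ι

lemma quadraticForm_center {ι : Type*} [Fintype ι] {r : Matrix ι ι ℝ} (hr : r.IsSymm)
    (y : ι → ℝ) :
    center y ⬝ᵥ r *ᵥ center y = y ⬝ᵥ r *ᵥ y
      - 2 * ((1 ⬝ᵥ y) / Fintype.card ι) * ((1 ᵥ* r) ⬝ᵥ y)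
      + ((1 ⬝ᵥ y) / Fintype.card ι) ^ 2 * (1 ⬝ᵥ r *ᵥ 1) := by
  have hcenter : center y = y - ((1 ⬝ᵥ y) / Fintype.card ι) • (1 : ι → ℝ) := by
    ext k
    simp [center, one_dotProduct]
  have hcross : y ⬝ᵥ r *ᵥ 1 = (1 ᵥ* r) ⬝ᵥ y := by
    rw [dotProduct_comm, ← Matrix.vecMul_transpose, hr.eq]
  rw [hcenter]
  simp only [Matrix.mulVec_sub, Matrix.mulVec_smul, sub_dotProduct, dotProduct_sub,
    smul_dotProduct, dotProduct_smul, smul_eq_mul, hcross, Matrix.dotProduct_mulVec 1 r y]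
  ring

lemma abs_quadraticForm_center_sub_le {ι : Type*} [Fintype ι] [Nonempty ι] {r : Matrix ι ι ℝ}
    (hr : r.IsSymm) {K : ℝ} (hK : 0 < K) (hsum : ∀ k, ∑ l, |r k l| ≤ K) (y : ι → ℝ) (s : ℝ) :
    |center y ⬝ᵥ r *ᵥ center y - s| ≤ |y ⬝ᵥ r *ᵥ y - s|
      + 2 * K / Fintype.card ι * (1 ⬝ᵥ y) ^ 2
      + (Fintype.card ι * K)⁻¹ * ((1 ᵥ* r) ⬝ᵥ y) ^ 2 := by
  have hn : 0 < (Fintype.card ι : ℝ) := by exact_mod_cast Fintype.card_pos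
  have hone : |(1 : ι → ℝ) ⬝ᵥ r *ᵥ 1| ≤ Fintype.card ι * (K * 1 ^ 2) :=
    abs_dotProduct_mulVec_le hsum fun k ↦ by simp
  rw [quadraticForm_center hr]
  generalize (1 : ι → ℝ) ⬝ᵥ y = m, (1 ᵥ* r) ⬝ᵥ y = b, (1 : ι → ℝ) ⬝ᵥ r *ᵥ 1 = q at *
  set n := (Fintype.card ι : ℝ)
  have hcross : |2 * (m / n) * b| ≤ K / n * m ^ 2 + (n * K)⁻¹ * b ^ 2 := by
    have hamgm := two_mul_le_add_sq (K * |m|) |b|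
    simp only [mul_pow, sq_abs] at hamgm
    calc |2 * (m / n) * b| = (n * K)⁻¹ * (2 * (K * |m|) * |b|) := by
          rw [abs_mul, abs_mul, abs_div, abs_two, abs_of_pos hn]
          field_simp
      _ ≤ (n * K)⁻¹ * (K ^ 2 * m ^ 2 + b ^ 2) := by gcongr
      _ = K / n * m ^ 2 + (n * K)⁻¹ * b ^ 2 := by field_simp
  have hmean : |(m / n) ^ 2 * q| ≤ K / n * m ^ 2 := by
    calc |(m / n) ^ 2 * q| = (m / n) ^ 2 * |q| := by rw [abs_mul, abs_sq]
      _ ≤ (m / n) ^ 2 * (n * (K * 1 ^ 2)) := by gcongr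
      _ = K / n * m ^ 2 := by field_simp
  calc |y ⬝ᵥ r *ᵥ y - 2 * (m / n) * b + (m / n) ^ 2 * q - s|
      = |(y ⬝ᵥ r *ᵥ y - s) - 2 * (m / n) * b + (m / n) ^ 2 * q| := by ring_nf
    _ ≤ |y ⬝ᵥ r *ᵥ y - s| + |2 * (m / n) * b| + |(m / n) ^ 2 * q| :=
        (abs_add_le _ _).trans (add_le_add_left (abs_sub _ _) _)
    _ ≤ |y ⬝ᵥ r *ᵥ y - s| + (K / n * m ^ 2 + (n * K)⁻¹ * b ^ 2) + K / n * m ^ 2 := by gcongr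
    _ = |y ⬝ᵥ r *ᵥ y - s| + 2 * K / n * m ^ 2 + (n * K)⁻¹ * b ^ 2 := by ring

lemma sum_sum_abs_mul_add_abs_mul_le {ι : Type*} [Fintype ι] {r : Matrix ι ι ℝ} {K : ℝ}
    (hK : ∀ k, ∑ l, |r k l| ≤ K) (k l : ι) :
    ∑ m, ∑ p, (|r k m| * |r l p| + |r k p| * |r l m|) ≤ 2 * K ^ 2 := by
  calc ∑ m, ∑ p, (|r k m| * |r l p| + |r k p| * |r l m|)
      = 2 * ((∑ m, |r k m|) * ∑ p, |r l p|) := by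
        simp only [sum_add_distrib, ← mul_sum, ← sum_mul]
        ring
    _ ≤ 2 * (K * K) := by
        gcongr
        exacts [(sum_nonneg fun _ _ ↦ abs_nonneg _).trans (hK k), hK k, hK l]
    _ = 2 * K ^ 2 := by ring

namespace IsCenteredGaussian

variable {ι α : Type*} [Fintype ι] {mα : MeasurableSpace α} {μ : Measure α} {x : ι → α → ℝ}
  {r : Matrix ι ι ℝ} {B K : ℝ}

lemma variance_quadraticForm_self_le (hx : IsCenteredGaussian x r μ) (hB : ∀ k l, |r k l| ≤ B)
    (hK : ∀ k, ∑ l, |r k l| ≤ K) :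
    Var[fun ω ↦ (x · ω) ⬝ᵥ r *ᵥ (x · ω); μ] ≤ 2 * B * Fintype.card ι * K ^ 3 := by
  have hterm (k l m p : ι) : r k l * r m p * (r k m * r l p + r k p * r l m)
      ≤ B * |r k l| * (|r k m| * |r l p| + |r k p| * |r l m|) := by
    calc r k l * r m p * (r k m * r l p + r k p * r l m)
        ≤ |r k l| * |r m p| * (|r k m| * |r l p| + |r k p| * |r l m|) := by
          refine (le_abs_self _).trans ?_
          rw [abs_mul, abs_mul, ← abs_mul (r k m), ← abs_mul (r k p)]
          gcongr
          exact abs_add_le _ _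
      _ ≤ |r k l| * B * (|r k m| * |r l p| + |r k p| * |r l m|) := by
          gcongr
          exact hB m p
      _ = B * |r k l| * (|r k m| * |r l p| + |r k p| * |r l m|) := by ring
  rw [hx.variance_quadraticForm]
  calc ∑ k, ∑ l, ∑ m, ∑ p, r k l * r m p * (r k m * r l p + r k p * r l m)
      ≤ ∑ k, ∑ l, ∑ m, ∑ p, B * |r k l| * (|r k m| * |r l p| + |r k p| * |r l m|) := by
        exact sum_le_sum fun k _ ↦ sum_le_sum fun l _ ↦ sum_le_sum fun m _ ↦ sum_le_sum
          fun p _ ↦ hterm k l m p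
    _ = ∑ k, ∑ l, B * |r k l| * ∑ m, ∑ p, (|r k m| * |r l p| + |r k p| * |r l m|) := by
        simp only [mul_sum]
    _ ≤ ∑ k, ∑ l, B * |r k l| * (2 * K ^ 2) := by
        gcongr with k _ l _
        exacts [mul_nonneg ((abs_nonneg _).trans (hB k l)) (abs_nonneg _),
          sum_sum_abs_mul_add_abs_mul_le hK k l]
    _ = ∑ k, 2 * B * K ^ 2 * ∑ l, |r k l| := by
        simp only [mul_sum]
        exact sum_congr rfl fun k _ ↦ sum_congr rfl fun l _ ↦ by ring
    _ ≤ ∑ _k : ι, 2 * B * K ^ 2 * K := by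
        gcongr with k _
        exacts [by have := (abs_nonneg _).trans (hB k k); positivity, hK k]
    _ = 2 * B * Fintype.card ι * K ^ 3 := by
        simp only [sum_const, card_univ, nsmul_eq_mul]
        ring

lemma integral_abs_quadraticForm_sub_le (hx : IsCenteredGaussian x r μ)
    (hB : ∀ k l, |r k l| ≤ B) (hK : ∀ k, ∑ l, |r k l| ≤ K) :
    ∫ ω, |(x · ω) ⬝ᵥ r *ᵥ (x · ω) - ∑ k, ∑ l, r k l ^ 2| ∂μ
      ≤ √(2 * B * Fintype.card ι * K ^ 3) := by
  have := hx.isProbabilityMeasure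
  have h := integral_abs_sub_integral_le_sqrt_variance (hx.memLp_two_quadraticForm r)
  simp only [hx.integral_quadraticForm, ← sq] at h
  exact h.trans (Real.sqrt_le_sqrt (hx.variance_quadraticForm_self_le hB hK))

lemma integral_abs_quadraticForm_center_sub_le (hx : IsCenteredGaussian x r μ) [Nonempty ι]
    (hB : ∀ k l, |r k l| ≤ B) (hK0 : 0 < K) (hK : ∀ k, ∑ l, |r k l| ≤ K) :
    ∫ ω, |center (x · ω) ⬝ᵥ r *ᵥ center (x · ω) - ∑ k, ∑ l, r k l ^ 2| ∂μ
      ≤ √(2 * B * Fintype.card ι * K ^ 3) + 3 * K ^ 2 := by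
  have := hx.isProbabilityMeasure
  have hsymm : r.IsSymm := Matrix.IsSymm.ext fun k l ↦ hx.comm l k
  have hmain := hx.integral_abs_quadraticForm_sub_le hB hK
  have hdev : Integrable (fun ω ↦ |(x · ω) ⬝ᵥ r *ᵥ (x · ω) - ∑ k, ∑ l, r k l ^ 2|) μ :=
    (((hx.memLp_two_quadraticForm r).integrable one_le_two).sub (integrable_const _)).abs
  have hlin (c : ι → ℝ) (a : ℝ) : Integrable (fun ω ↦ a * (c ⬝ᵥ (x · ω)) ^ 2) μ :=
    (hx.hasGaussianLaw_dotProduct c).memLp_two.integrable_sq.const_mul a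
  have hmean : (1 : ι → ℝ) ⬝ᵥ r *ᵥ 1 ≤ Fintype.card ι * (K * 1 ^ 2) :=
    (le_abs_self _).trans (abs_dotProduct_mulVec_le hK fun k ↦ by simp)
  have hcross : (1 ᵥ* r) ⬝ᵥ r *ᵥ (1 ᵥ* r) ≤ Fintype.card ι * (K * K ^ 2) := by
    refine (le_abs_self _).trans (abs_dotProduct_mulVec_le hK fun k ↦ ?_)
    rw [← hsymm.eq, Matrix.vecMul_transpose]
    simpa [Matrix.mulVec, dotProduct] using (abs_sum_le_sum_abs _ _).trans (hK k)
  calc ∫ ω, |center (x · ω) ⬝ᵥ r *ᵥ center (x · ω) - ∑ k, ∑ l, r k l ^ 2| ∂μ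
      ≤ ∫ ω, (|(x · ω) ⬝ᵥ r *ᵥ (x · ω) - ∑ k, ∑ l, r k l ^ 2|
          + 2 * K / Fintype.card ι * (1 ⬝ᵥ (x · ω)) ^ 2
          + (Fintype.card ι * K)⁻¹ * ((1 ᵥ* r) ⬝ᵥ (x · ω)) ^ 2) ∂μ :=
        integral_mono_of_nonneg (ae_of_all _ fun _ ↦ abs_nonneg _)
          ((hdev.add (hlin _ _)).add (hlin _ _))
          (ae_of_all _ fun ω ↦ abs_quadraticForm_center_sub_le hsymm hK0 hK _ _)
    _ = ∫ ω, |(x · ω) ⬝ᵥ r *ᵥ (x · ω) - ∑ k, ∑ l, r k l ^ 2| ∂μ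
          + 2 * K / Fintype.card ι * ((1 : ι → ℝ) ⬝ᵥ r *ᵥ 1)
          + (Fintype.card ι * K)⁻¹ * ((1 ᵥ* r) ⬝ᵥ r *ᵥ (1 ᵥ* r)) := by
        rw [integral_add (hdev.fun_add (hlin _ _)) (hlin _ _), integral_add hdev (hlin _ _),
          integral_const_mul, integral_const_mul, hx.integral_dotProduct_sq,
          hx.integral_dotProduct_sq]
    _ ≤ √(2 * B * Fintype.card ι * K ^ 3)
          + 2 * K / Fintype.card ι * (Fintype.card ι * (K * 1 ^ 2))
          + (Fintype.card ι * K)⁻¹ * (Fintype.card ι * (K * K ^ 2)) := by gcongr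
    _ = √(2 * B * Fintype.card ι * K ^ 3) + 3 * K ^ 2 := by
        field_simp
        ring

end IsCenteredGaussian

/-! ### Kolmogorov distance to a Gaussian law -/

section GaussianComparison

lemma abs_mul_gaussianPDFReal_le_one (x : ℝ) : |x| * gaussianPDFReal 0 1 x ≤ 1 := by
  have hpi : (√(2 * π))⁻¹ ≤ 1 :=
    inv_le_one_of_one_le₀ (Real.one_le_sqrt.2 (by linarith [Real.pi_gt_three]))
  have hexp : |x| ≤ rexp (x ^ 2 / 2) := by
    have h := Real.add_one_le_exp (x ^ 2 / 2)
    nlinarith [sq_abs x, sq_nonneg (|x| - 1)]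
  calc |x| * gaussianPDFReal 0 1 x = (√(2 * π))⁻¹ * (|x| * rexp (-(x ^ 2 / 2))) := by
        simp only [gaussianPDFReal, NNReal.coe_one, mul_one, sub_zero, neg_div]
        ring
    _ ≤ 1 * (rexp (x ^ 2 / 2) * rexp (-(x ^ 2 / 2))) := by gcongr
    _ = 1 := by rw [← Real.exp_add, add_neg_cancel, Real.exp_zero, one_mul]

lemma gaussianPDFReal_le_of_abs_le {x y : ℝ} (h : |x| ≤ |y|) (v : ℝ≥0) :
    gaussianPDFReal 0 v y ≤ gaussianPDFReal 0 v x := by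
  have := sq_le_sq.2 h
  simp only [gaussianPDFReal, sub_zero]
  gcongr

lemma measureReal_gaussianReal_Iic_sub_Iic {v : ℝ≥0} (hv : v ≠ 0) (μ a b : ℝ) :
    (gaussianReal μ v).real (Set.Iic b) - (gaussianReal μ v).real (Set.Iic a)
      = ∫ x in a..b, gaussianPDFReal μ v x := by
  have hreal (z : ℝ) :
      (gaussianReal μ v).real (Set.Iic z) = ∫ x in Set.Iic z, gaussianPDFReal μ v x := by
    rw [measureReal_def, gaussianReal_apply_eq_integral μ hv,
      ENNReal.toReal_ofReal (integral_nonneg fun x ↦ gaussianPDFReal_nonneg μ v x)]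
  have hint := integrable_gaussianPDFReal μ v
  rw [hreal, hreal, intervalIntegral.integral_Iic_sub_Iic hint.integrableOn hint.integrableOn]

lemma abs_measureReal_gaussianReal_Iic_mul_sub_le {l : ℝ} (hl : 1 ≤ l) (a : ℝ) :
    |(gaussianReal 0 1).real (Set.Iic (l * a)) - (gaussianReal 0 1).real (Set.Iic a)|
      ≤ l - 1 := by
  have hbound : ∀ x ∈ Set.uIoc a (l * a), ‖gaussianPDFReal 0 1 x‖ ≤ gaussianPDFReal 0 1 a := by
    intro x hx
    rw [Real.norm_of_nonneg (gaussianPDFReal_nonneg 0 1 x)]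
    refine gaussianPDFReal_le_of_abs_le ?_ 1
    rcases Set.mem_uIoc.1 hx with ⟨hax, hxl⟩ | ⟨hlx, hxa⟩
    · have : 0 ≤ a := by nlinarith
      exact abs_le_abs_of_nonneg this hax.le
    · have : a ≤ 0 := by nlinarith
      exact abs_le_abs_of_nonpos this hxa
  rw [measureReal_gaussianReal_Iic_sub_Iic one_ne_zero, ← Real.norm_eq_abs]
  calc ‖∫ x in a..l * a, gaussianPDFReal 0 1 x‖
      ≤ gaussianPDFReal 0 1 a * |l * a - a| :=
        intervalIntegral.norm_integral_le_of_norm_le_const hbound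
    _ = |a| * gaussianPDFReal 0 1 a * (l - 1) := by
        rw [show l * a - a = (l - 1) * a by ring, abs_mul, abs_of_nonneg (sub_nonneg.2 hl)]
        ring
    _ ≤ 1 * (l - 1) := by
        exact mul_le_mul_of_nonneg_right (abs_mul_gaussianPDFReal_le_one a) (sub_nonneg.2 hl)
    _ = l - 1 := one_mul _

lemma measureReal_gaussianReal_Iic {v : ℝ≥0} (hv : v ≠ 0) (z : ℝ) :
    (gaussianReal 0 v).real (Set.Iic z) = (gaussianReal 0 1).real (Set.Iic (z / √v)) := by
  have hs : 0 < √(v : ℝ) := Real.sqrt_pos.2 (NNReal.coe_pos.2 (pos_of_ne_zero hv))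
  have hmap : (gaussianReal 0 1).map (√(v : ℝ) * ·) = gaussianReal 0 v := by
    rw [gaussianReal_map_const_mul, mul_zero, mul_one]
    exact congrArg _ (NNReal.eq (Real.sq_sqrt v.coe_nonneg))
  rw [← hmap, map_measureReal_apply (by fun_prop) measurableSet_Iic]
  congr 1
  ext x
  simp only [Set.mem_preimage, Set.mem_Iic, le_div_iff₀' hs]

lemma abs_measureReal_gaussianReal_Iic_sub_le_of_le {v w : ℝ≥0} (hv : v ≠ 0) (hvw : v ≤ w)
    (z : ℝ) :
    |(gaussianReal 0 v).real (Set.Iic z) - (gaussianReal 0 w).real (Set.Iic z)|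
      ≤ (w - v) / v := by
  have hv0 : 0 < (v : ℝ) := NNReal.coe_pos.2 (pos_of_ne_zero hv)
  have hw : w ≠ 0 := (hv.bot_lt.trans_le hvw).ne'
  have hl : 1 ≤ (w : ℝ) / v := (one_le_div hv0).2 (NNReal.coe_le_coe.2 hvw)
  have hz : z / √(v : ℝ) = √((w : ℝ) / v) * (z / √w) := by
    rw [Real.sqrt_div w.coe_nonneg]
    have : √(w : ℝ) ≠ 0 := by positivity
    field_simp
  rw [measureReal_gaussianReal_Iic hv, measureReal_gaussianReal_Iic hw, hz]
  calc _ ≤ √((w : ℝ) / v) - 1 :=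
        abs_measureReal_gaussianReal_Iic_mul_sub_le (Real.one_le_sqrt.2 hl) _
    _ ≤ (w : ℝ) / v - 1 := by
        gcongr
        exact Real.sqrt_le_self_iff.2 (Or.inr hl)
    _ = (w - v) / v := by rw [sub_div, div_self hv0.ne']

lemma abs_measureReal_gaussianReal_Iic_sub_le (v : ℝ≥0) {w : ℝ≥0} (hw : w ≠ 0) (z : ℝ) :
    |(gaussianReal 0 v).real (Set.Iic z) - (gaussianReal 0 w).real (Set.Iic z)|
      ≤ 2 / w * |(v : ℝ) - w| := by
  have hw0 : 0 < (w : ℝ) := NNReal.coe_pos.2 (pos_of_ne_zero hw)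
  rw [div_mul_eq_mul_div]
  rcases le_total w v with hwv | hvw
  · have hwv' : (w : ℝ) ≤ v := hwv
    rw [abs_sub_comm, abs_of_nonneg (sub_nonneg.2 hwv')]
    refine (abs_measureReal_gaussianReal_Iic_sub_le_of_le hw hwv z).trans ?_
    gcongr
    linarith
  rw [abs_sub_comm (v : ℝ), abs_of_nonneg (sub_nonneg.2 (NNReal.coe_le_coe.2 hvw)),
    le_div_iff₀ hw0]
  rcases le_or_gt (w : ℝ) (2 * v) with hwv | hwv
  · have hv0 : 0 < (v : ℝ) := by linarith
    have h := abs_measureReal_gaussianReal_Iic_sub_le_of_le (NNReal.coe_ne_zero.1 hv0.ne') hvw z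
    rw [le_div_iff₀ hv0] at h
    nlinarith [abs_nonneg
      ((gaussianReal 0 v).real (Set.Iic z) - (gaussianReal 0 w).real (Set.Iic z))]
  · have h := abs_sub_le_of_nonneg_of_le (measureReal_nonneg (μ := gaussianReal 0 v)
      (s := Set.Iic z)) measureReal_le_one (measureReal_nonneg (μ := gaussianReal 0 w)
      (s := Set.Iic z)) measureReal_le_one
    nlinarith

end GaussianComparison

/-! ### Gaussian variance mixtures -/

section Mixture

variable {α E F G : Type*} {mα : MeasurableSpace α} [MeasurableSpace E] [MeasurableSpace F]
  [MeasurableSpace G] {μ : Measure α} {X : α → E} {Y : α → F}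

lemma measurable_measure_map {ν : Measure E} [SFinite ν] {f : F → E → G}
    (hf : Measurable (Function.uncurry f)) {s : Set G} (hs : MeasurableSet s) :
    Measurable fun y ↦ ν.map (f y) s := by
  have hmap (y : F) : ν.map (f y) s = ν (Prod.mk y ⁻¹' (Function.uncurry f ⁻¹' s)) :=
    Measure.map_apply hf.of_uncurry_left hs
  simpa only [hmap] using measurable_measure_prodMk_left (hf hs)

lemma measure_map_eq_lintegral_of_indepFun [IsFiniteMeasure μ] (hX : AEMeasurable X μ)
    (hY : AEMeasurable Y μ) (hXY : IndepFun X Y μ) {f : F → E → G}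
    (hf : Measurable (Function.uncurry f)) {s : Set G} (hs : MeasurableSet s) :
    μ.map (fun ω ↦ f (Y ω) (X ω)) s = ∫⁻ ω, (μ.map X).map (f (Y ω)) s ∂μ := by
  have hlaw := (indepFun_iff_map_prod_eq_prod_map_map hY hX).1 hXY.symm
  calc μ.map (fun ω ↦ f (Y ω) (X ω)) s
      = μ.map (fun ω ↦ (Y ω, X ω)) (Function.uncurry f ⁻¹' s) := by
        rw [Measure.map_apply_of_aemeasurable (hY.prodMk hX) (hf hs)]
        exact Measure.map_apply_of_aemeasurable (hf.comp_aemeasurable (hY.prodMk hX)) hs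
    _ = ∫⁻ y, (μ.map X).map (f y) s ∂(μ.map Y) := by
        rw [hlaw, Measure.prod_apply (hf hs)]
        exact lintegral_congr fun y ↦ (Measure.map_apply hf.of_uncurry_left hs).symm
    _ = ∫⁻ ω, (μ.map X).map (f (Y ω)) s ∂μ :=
        lintegral_map' (measurable_measure_map hf hs).aemeasurable hY

/-- Conditioning on `Y` reduces the comparison to that of two centered Gaussian laws. -/
lemma dKol_map_le_of_indepFun [IsProbabilityMeasure μ] (hX : AEMeasurable X μ)
    (hY : AEMeasurable Y μ) (hXY : IndepFun X Y μ) {f : F → E → ℝ}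
    (hf : Measurable (Function.uncurry f)) {v : F → ℝ≥0}
    (hv : ∀ y, (μ.map X).map (f y) = gaussianReal 0 (v y))
    (hint : Integrable (fun ω ↦ (v (Y ω) : ℝ)) μ) {w : ℝ≥0} (hw : w ≠ 0) :
    dKol (μ.map fun ω ↦ f (Y ω) (X ω)) (gaussianReal 0 w)
      ≤ 2 / w * ∫ ω, |(v (Y ω) : ℝ) - w| ∂μ := by
  refine ciSup_le fun z ↦ ?_
  have hmeas : AEMeasurable (fun ω ↦ gaussianReal 0 (v (Y ω)) (Set.Iic z)) μ := by
    simp only [← hv]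
    exact (measurable_measure_map hf measurableSet_Iic).comp_aemeasurable hY
  have hcdf : Integrable (fun ω ↦ (gaussianReal 0 (v (Y ω))).real (Set.Iic z)) μ := by
    refine .of_bound (C := 1) hmeas.ennreal_toReal.aestronglyMeasurable (ae_of_all _ fun ω ↦ ?_)
    rw [Real.norm_of_nonneg measureReal_nonneg]
    exact measureReal_le_one
  have hmix : (μ.map (fun ω ↦ f (Y ω) (X ω)) (Set.Iic z)).toReal
      = ∫ ω, (gaussianReal 0 (v (Y ω))).real (Set.Iic z) ∂μ := by
    rw [measure_map_eq_lintegral_of_indepFun hX hY hXY hf measurableSet_Iic]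
    simp only [hv]
    exact (integral_toReal hmeas (ae_of_all _ fun ω ↦ measure_lt_top _ _)).symm
  calc |(μ.map (fun ω ↦ f (Y ω) (X ω)) (Set.Iic z)).toReal
        - (gaussianReal 0 w (Set.Iic z)).toReal|
      = |∫ ω, ((gaussianReal 0 (v (Y ω))).real (Set.Iic z)
          - (gaussianReal 0 w).real (Set.Iic z)) ∂μ| := by
        rw [hmix, integral_sub hcdf (integrable_const _), integral_const, probReal_univ, one_smul,
          measureReal_def (gaussianReal 0 w)]
    _ ≤ ∫ ω, |(gaussianReal 0 (v (Y ω))).real (Set.Iic z)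
          - (gaussianReal 0 w).real (Set.Iic z)| ∂μ := abs_integral_le_integral_abs
    _ ≤ ∫ ω, 2 / w * |(v (Y ω) : ℝ) - w| ∂μ :=
        integral_mono (hcdf.sub (integrable_const _)).abs
          ((hint.sub (integrable_const _)).abs.const_mul _)
          fun ω ↦ abs_measureReal_gaussianReal_Iic_sub_le (v (Y ω)) hw z
    _ = 2 / w * ∫ ω, |(v (Y ω) : ℝ) - w| ∂μ := integral_const_mul _ _

end Mixture

namespace IsCenteredGaussian

variable {ι α : Type*} [Fintype ι] {mα : MeasurableSpace α} {μ : Measure α} {x y : ι → α → ℝ}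
  {r : Matrix ι ι ℝ} {B K : ℝ}

lemma dotProduct_mulVec_self_nonneg (hx : IsCenteredGaussian x r μ) (c : ι → ℝ) :
    0 ≤ c ⬝ᵥ r *ᵥ c :=
  hx.variance_dotProduct c ▸ variance_nonneg _ μ

lemma dKol_map_dotProduct_le {F : Type*} [MeasurableSpace F] {Y : α → F}
    (hx : IsCenteredGaussian x r μ) (hY : AEMeasurable Y μ)
    (hxY : IndepFun (fun ω k ↦ x k ω) Y μ) {c : F → ι → ℝ} (hc : Measurable c)
    (hint : Integrable (fun ω ↦ c (Y ω) ⬝ᵥ r *ᵥ c (Y ω)) μ) {w : ℝ≥0} (hw : w ≠ 0) :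
    dKol (μ.map fun ω ↦ c (Y ω) ⬝ᵥ (x · ω)) (gaussianReal 0 w)
      ≤ 2 / w * ∫ ω, |c (Y ω) ⬝ᵥ r *ᵥ c (Y ω) - w| ∂μ := by
  have := hx.isProbabilityMeasure
  have hv (u : F) : ((c u ⬝ᵥ r *ᵥ c u).toNNReal : ℝ) = c u ⬝ᵥ r *ᵥ c u :=
    Real.coe_toNNReal _ (hx.dotProduct_mulVec_self_nonneg _)
  have hf : Measurable (Function.uncurry fun u v ↦ c u ⬝ᵥ v) := by
    simp only [Function.uncurry_def, dotProduct]
    fun_prop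
  have hmap (u : F) : (μ.map fun ω k ↦ x k ω).map (c u ⬝ᵥ ·)
      = gaussianReal 0 (c u ⬝ᵥ r *ᵥ c u).toNNReal := by
    rw [← hx.map_dotProduct, AEMeasurable.map_map_of_aemeasurable
      hf.of_uncurry_left.aemeasurable hx.hasGaussianLaw.aemeasurable]
    rfl
  simpa only [hv] using dKol_map_le_of_indepFun hx.hasGaussianLaw.aemeasurable hY hxY hf hmap
    (by simpa only [hv] using hint) hw

lemma integrable_quadraticForm_center (hx : IsCenteredGaussian x r μ) :
    Integrable (fun ω ↦ center (x · ω) ⬝ᵥ r *ᵥ center (x · ω)) μ := by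
  have hcenter (k : ι) : MemLp (fun ω ↦ center (x · ω) k) 2 μ := by
    simp only [center, div_eq_mul_inv]
    exact (hx.memLp_two k).sub ((memLp_finsetSum univ fun l _ ↦ hx.memLp_two l).mul_const _)
  simp only [dotProduct_mulVec_self_eq_sum]
  exact integrable_finsetSum _ fun p _ ↦
    ((hcenter p.1).integrable_mul (hcenter p.2)).const_mul _

lemma dKol_map_center_dotProduct_le [Nonempty ι] (hx : IsCenteredGaussian x r μ)
    (hy : IsCenteredGaussian y r μ) (hxy : IndepFun (fun ω k ↦ x k ω) (fun ω k ↦ y k ω) μ)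
    (hB : ∀ k l, |r k l| ≤ B) (hK0 : 0 < K) (hK : ∀ k, ∑ l, |r k l| ≤ K) (a : ℝ) {w : ℝ≥0}
    (hw : w ≠ 0) :
    dKol (μ.map fun ω ↦ a * (center (y · ω) ⬝ᵥ (x · ω))) (gaussianReal 0 w)
      ≤ 2 / w * (a ^ 2 * (√(2 * B * Fintype.card ι * K ^ 3) + 3 * K ^ 2)
        + |a ^ 2 * ∑ k, ∑ l, r k l ^ 2 - w|) := by
  have := hx.isProbabilityMeasure
  set S := ∑ k, ∑ l, r k l ^ 2
  let V (ω : α) : ℝ := center (y · ω) ⬝ᵥ r *ᵥ center (y · ω)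
  have hV : Integrable V μ := hy.integrable_quadraticForm_center
  have hquad (u : ι → ℝ) : (a • center u) ⬝ᵥ r *ᵥ (a • center u)
      = a ^ 2 * (center u ⬝ᵥ r *ᵥ center u) := by
    simp only [Matrix.mulVec_smul, smul_dotProduct, dotProduct_smul, smul_eq_mul]
    ring
  have hcenter : Measurable fun u : ι → ℝ ↦ a • center u := by
    unfold center
    fun_prop
  have hmix := hx.dKol_map_dotProduct_le hy.hasGaussianLaw.aemeasurable hxy hcenter
    (by simpa only [hquad] using hV.const_mul (a ^ 2)) hw
  simp only [hquad, smul_dotProduct, smul_eq_mul] at hmix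
  refine hmix.trans (mul_le_mul_of_nonneg_left ?_ (by positivity))
  have hdev : Integrable (fun ω ↦ a ^ 2 * |V ω - S|) μ :=
    (hV.sub (integrable_const S)).abs.const_mul _
  calc ∫ ω, |a ^ 2 * V ω - w| ∂μ ≤ ∫ ω, (a ^ 2 * |V ω - S| + |a ^ 2 * S - w|) ∂μ := by
        refine integral_mono ((hV.const_mul _).sub (integrable_const _)).abs
          (hdev.add (integrable_const _)) fun ω ↦ ?_
        rw [← abs_sq a, ← abs_mul, abs_sq, mul_sub]
        exact abs_sub_le _ _ _
    _ = a ^ 2 * ∫ ω, |V ω - S| ∂μ + |a ^ 2 * S - w| := by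
        rw [integral_add hdev (integrable_const _), integral_const_mul, integral_const,
          probReal_univ, one_smul]
    _ ≤ a ^ 2 * (√(2 * B * Fintype.card ι * K ^ 3) + 3 * K ^ 2) + |a ^ 2 * S - w| := by
        gcongr
        exact hy.integral_abs_quadraticForm_center_sub_le hB hK0 hK

end IsCenteredGaussian

/-! ### First-order autoregressive covariances -/

/-- The covariance `∑ i ∈ Ioc 0 (min k l), (1 - ρ²) ρ^(k - i) ρ^(l - i)` of a first-order
autoregression with ratio `ρ` started at `0`, in closed form and normalized to have stationary
variance `1`. -/
def autoregressiveCov (ρ : ℝ) (k l : ℕ) : ℝ := ρ ^ Nat.dist k l - ρ ^ (k + l)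

section AutoregressiveCov

variable {q ρ : ℝ}

lemma geom_sum_le_one_div (hq0 : 0 ≤ q) (hq1 : q < 1) (N : ℕ) :
    ∑ j ∈ range N, q ^ j ≤ 1 / (1 - q) := by
  rw [one_div, ← tsum_geometric_of_lt_one hq0 hq1]
  exact (summable_geometric_of_lt_one hq0 hq1).sum_le_tsum _ fun j _ ↦ pow_nonneg hq0 j

lemma sum_pow_dist_eq (q : ℝ) (N : ℕ) :
    ∑ l ∈ range N, q ^ Nat.dist N l = q * ∑ j ∈ range N, q ^ j := by
  rw [← sum_range_reflect (fun j ↦ q ^ j), mul_sum]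
  refine sum_congr rfl fun l hl ↦ ?_
  have hlt := mem_range.1 hl
  rw [← pow_succ', Nat.dist_eq_sub_of_le_right hlt.le]
  congr 1
  omega

lemma sum_pow_dist_le (hq0 : 0 ≤ q) (hq1 : q < 1) (N k : ℕ) :
    ∑ l ∈ range N, q ^ Nat.dist k l ≤ 2 / (1 - q) := by
  have hgeom := geom_sum_le_one_div hq0 hq1
  have hbelow : ∑ l ∈ range k, q ^ Nat.dist k l ≤ 1 / (1 - q) := by
    rw [sum_pow_dist_eq]
    exact (mul_le_of_le_one_left (sum_nonneg fun j _ ↦ pow_nonneg hq0 j) hq1.le).trans (hgeom k)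
  have habove : ∑ j ∈ range N, q ^ Nat.dist k (k + j) ≤ 1 / (1 - q) := by
    simpa only [Nat.dist_eq_sub_of_le (Nat.le_add_right k _), Nat.add_sub_cancel_left]
      using hgeom N
  calc ∑ l ∈ range N, q ^ Nat.dist k l ≤ ∑ l ∈ range (k + N), q ^ Nat.dist k l :=
        sum_le_sum_of_subset_of_nonneg (range_mono (Nat.le_add_left N k))
          fun _ _ _ ↦ pow_nonneg hq0 _
    _ = ∑ l ∈ range k, q ^ Nat.dist k l + ∑ j ∈ range N, q ^ Nat.dist k (k + j) :=
        sum_range_add _ _ _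
    _ ≤ 1 / (1 - q) + 1 / (1 - q) := add_le_add hbelow habove
    _ = 2 / (1 - q) := by ring

lemma one_sub_sq_mul_sum_sum_pow_dist (q : ℝ) (N : ℕ) :
    (1 - q) ^ 2 * ∑ k ∈ range N, ∑ l ∈ range N, q ^ Nat.dist k l
      = N * (1 - q ^ 2) - 2 * q * (1 - q ^ N) := by
  induction N with
  | zero => simp
  | succ N ih =>
    have hcol : ∑ k ∈ range N, q ^ Nat.dist k N = q * ∑ j ∈ range N, q ^ j := by
      simpa only [Nat.dist_comm] using sum_pow_dist_eq q N
    simp only [sum_range_succ _ N, sum_add_distrib, hcol, sum_pow_dist_eq, Nat.dist_self]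
    push_cast
    linear_combination ih + 2 * q * (1 - q) * geom_sum_mul_neg q N

lemma abs_sum_sum_pow_dist_sub_le (hq0 : 0 ≤ q) (hq1 : q < 1) (N : ℕ) :
    |∑ k ∈ range N, ∑ l ∈ range N, q ^ Nat.dist k l - N * ((1 + q) / (1 - q))|
      ≤ 2 / (1 - q) ^ 2 := by
  have hsub : 0 < 1 - q := sub_pos.2 hq1
  have hexact : ∑ k ∈ range N, ∑ l ∈ range N, q ^ Nat.dist k l - N * ((1 + q) / (1 - q))
      = -(2 * (q * (1 - q ^ N)) / (1 - q) ^ 2) := by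
    field_simp
    linear_combination one_sub_sq_mul_sum_sum_pow_dist q N
  have hpow0 : 0 ≤ q ^ N := pow_nonneg hq0 N
  have hpow1 : 0 ≤ 1 - q ^ N := sub_nonneg.2 (pow_le_one₀ hq0 hq1.le)
  have hle : q * (1 - q ^ N) ≤ 1 := mul_le_one₀ hq1.le hpow1 (by linarith)
  rw [hexact, abs_neg, abs_of_nonneg (by positivity)]
  gcongr
  linarith

lemma pow_add_le_pow_dist (hρ0 : 0 ≤ ρ) (hρ1 : ρ < 1) (k l : ℕ) :
    ρ ^ (k + l) ≤ ρ ^ Nat.dist k l :=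
  pow_le_pow_of_le_one hρ0 hρ1.le (by unfold Nat.dist; omega)

lemma autoregressiveCov_nonneg (hρ0 : 0 ≤ ρ) (hρ1 : ρ < 1) (k l : ℕ) :
    0 ≤ autoregressiveCov ρ k l :=
  sub_nonneg.2 (pow_add_le_pow_dist hρ0 hρ1 k l)

lemma autoregressiveCov_le_pow_dist (hρ0 : 0 ≤ ρ) (k l : ℕ) :
    autoregressiveCov ρ k l ≤ ρ ^ Nat.dist k l :=
  sub_le_self _ (pow_nonneg hρ0 _)

lemma abs_autoregressiveCov_le_one (hρ0 : 0 ≤ ρ) (hρ1 : ρ < 1) (k l : ℕ) :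
    |autoregressiveCov ρ k l| ≤ 1 := by
  rw [abs_of_nonneg (autoregressiveCov_nonneg hρ0 hρ1 k l)]
  exact (autoregressiveCov_le_pow_dist hρ0 k l).trans (pow_le_one₀ hρ0 hρ1.le)

lemma sum_abs_autoregressiveCov_le (hρ0 : 0 ≤ ρ) (hρ1 : ρ < 1) (N k : ℕ) :
    ∑ l ∈ range N, |autoregressiveCov ρ k l| ≤ 2 / (1 - ρ) := by
  refine (sum_le_sum fun l _ ↦ ?_).trans (sum_pow_dist_le hρ0 hρ1 N k)
  rw [abs_of_nonneg (autoregressiveCov_nonneg hρ0 hρ1 k l)]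
  exact autoregressiveCov_le_pow_dist hρ0 k l

lemma abs_autoregressiveCov_sq_sub_le (hρ0 : 0 ≤ ρ) (hρ1 : ρ < 1) (k l : ℕ) :
    |autoregressiveCov ρ k l ^ 2 - (ρ ^ 2) ^ Nat.dist k l| ≤ 2 * (ρ ^ k * ρ ^ l) := by
  have hpos : 0 ≤ ρ ^ (k + l) := pow_nonneg hρ0 _
  have hle := pow_add_le_pow_dist hρ0 hρ1 k l
  have hone : ρ ^ Nat.dist k l ≤ 1 := pow_le_one₀ hρ0 hρ1.le
  rw [autoregressiveCov, pow_right_comm, ← pow_add, abs_le]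
  constructor <;> nlinarith

lemma abs_sum_sum_autoregressiveCov_sq_sub_le (hρ0 : 0 ≤ ρ) (hρ1 : ρ < 1) (N : ℕ) :
    |∑ k ∈ range N, ∑ l ∈ range N, autoregressiveCov ρ k l ^ 2
        - N * ((1 + ρ ^ 2) / (1 - ρ ^ 2))| ≤ 4 / (1 - ρ) ^ 2 := by
  have hsq : ρ ^ 2 ≤ ρ := pow_le_of_le_one hρ0 hρ1.le two_ne_zero
  have hsub : 0 < 1 - ρ := sub_pos.2 hρ1
  have hboundary : |∑ k ∈ range N, ∑ l ∈ range N, autoregressiveCov ρ k l ^ 2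
      - ∑ k ∈ range N, ∑ l ∈ range N, (ρ ^ 2) ^ Nat.dist k l| ≤ 2 * (1 / (1 - ρ)) ^ 2 := by
    calc |∑ k ∈ range N, ∑ l ∈ range N, autoregressiveCov ρ k l ^ 2
        - ∑ k ∈ range N, ∑ l ∈ range N, (ρ ^ 2) ^ Nat.dist k l|
        ≤ ∑ k ∈ range N, ∑ l ∈ range N, 2 * (ρ ^ k * ρ ^ l) := by
          simp only [← sum_sub_distrib]
          exact (abs_sum_le_sum_abs _ _).trans <| sum_le_sum fun k _ ↦
            (abs_sum_le_sum_abs _ _).trans <| sum_le_sum fun l _ ↦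
              abs_autoregressiveCov_sq_sub_le hρ0 hρ1 k l
      _ = 2 * (∑ k ∈ range N, ρ ^ k) ^ 2 := by
          rw [sq, sum_mul_sum]
          simp only [mul_sum]
      _ ≤ 2 * (1 / (1 - ρ)) ^ 2 := by
          gcongr
          exact geom_sum_le_one_div hρ0 hρ1 N
  have hstationary := abs_sum_sum_pow_dist_sub_le (sq_nonneg ρ) (hsq.trans_lt hρ1) N
  calc _ ≤ 2 * (1 / (1 - ρ)) ^ 2 + 2 / (1 - ρ ^ 2) ^ 2 :=
        (abs_sub_le _ _ _).trans (add_le_add hboundary hstationary)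
    _ ≤ 2 * (1 / (1 - ρ)) ^ 2 + 2 / (1 - ρ) ^ 2 := by gcongr
    _ = 4 / (1 - ρ) ^ 2 := by
        field_simp
        ring

end AutoregressiveCov

/-! ### Sampled Ornstein–Uhlenbeck processes -/

/-- The covariance matrix of `n` observations, with mesh `Δ`, of an Ornstein–Uhlenbeck process of
rate `θ` started at `0`. -/
def ouGridCov (θ Δ : ℝ) (n : ℕ) : Matrix (Fin n) (Fin n) ℝ :=
  fun k l ↦ autoregressiveCov (rexp (-(θ * Δ))) k l / (2 * θ)

section OUGridCov

variable {θ Δ : ℝ}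

lemma le_one_sub_exp_neg_mul (u : ℝ) : u ≤ (1 - rexp (-u)) * (1 + u) := by
  have h : rexp (-u) * (1 + u) ≤ rexp (-u) * rexp u := by
    gcongr
    linarith [Real.add_one_le_exp u]
  rw [← Real.exp_add, neg_add_cancel, Real.exp_zero] at h
  linarith

lemma exp_neg_mul_lt_one (hθ : 0 < θ) (hΔ : 0 < Δ) : rexp (-(θ * Δ)) < 1 :=
  Real.exp_lt_one_iff.2 (neg_neg_of_pos (mul_pos hθ hΔ))

lemma div_one_sub_exp_neg_mul_le (hθ : 0 < θ) (hΔ : 0 < Δ) (hΔ1 : Δ ≤ 1) :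
    Δ / (1 - rexp (-(θ * Δ))) ≤ (1 + θ) / θ := by
  have hsub : 0 < 1 - rexp (-(θ * Δ)) := sub_pos.2 (exp_neg_mul_lt_one hθ hΔ)
  rw [div_le_div_iff₀ hsub hθ]
  calc Δ * θ ≤ (1 - rexp (-(θ * Δ))) * (1 + θ * Δ) := by
        rw [mul_comm]
        exact le_one_sub_exp_neg_mul _
    _ ≤ (1 - rexp (-(θ * Δ))) * (1 + θ) := by
        gcongr
        exact mul_le_of_le_one_right hθ.le hΔ1
    _ = (1 + θ) * (1 - rexp (-(θ * Δ))) := mul_comm _ _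

lemma abs_mul_one_add_exp_div_one_sub_exp_sub_le {u : ℝ} (hu : 0 < u) :
    |u * ((1 + rexp (-u)) / (1 - rexp (-u))) - 2| ≤ 2 * u := by
  have hupper := Real.add_one_le_exp (-u)
  have hlower := le_one_sub_exp_neg_mul u
  have := Real.exp_pos (-u)
  have hsub : 0 < 1 - rexp (-u) := sub_pos.2 (Real.exp_lt_one_iff.2 (neg_neg_of_pos hu))
  have hdiv : u * ((1 + rexp (-u)) / (1 - rexp (-u))) - 2
      = (u * (1 + rexp (-u)) - 2 * (1 - rexp (-u))) / (1 - rexp (-u)) := by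
    field_simp
  rw [hdiv, abs_div, abs_of_pos hsub, div_le_iff₀ hsub, abs_le]
  constructor <;> nlinarith

lemma abs_ouGridCov_le (hθ : 0 < θ) (hΔ : 0 < Δ) {n : ℕ} (k l : Fin n) :
    |ouGridCov θ Δ n k l| ≤ 1 / (2 * θ) := by
  rw [ouGridCov, abs_div, abs_of_pos (by positivity : 0 < 2 * θ)]
  gcongr
  exact abs_autoregressiveCov_le_one (Real.exp_pos _).le (exp_neg_mul_lt_one hθ hΔ) k l

lemma sum_abs_ouGridCov_le (hθ : 0 < θ) (hΔ : 0 < Δ) (hΔ1 : Δ ≤ 1) {n : ℕ} (k : Fin n) :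
    ∑ l, |ouGridCov θ Δ n k l| ≤ (1 + θ) / θ ^ 2 / Δ := by
  have hrow := sum_abs_autoregressiveCov_le (Real.exp_pos _).le (exp_neg_mul_lt_one hθ hΔ) n k
  rw [Finset.sum_range] at hrow
  have hsub : 0 < 1 - rexp (-(θ * Δ)) := sub_pos.2 (exp_neg_mul_lt_one hθ hΔ)
  calc ∑ l, |ouGridCov θ Δ n k l|
      = (∑ l : Fin n, |autoregressiveCov (rexp (-(θ * Δ))) k l|) / (2 * θ) := by
        simp only [ouGridCov, abs_div, abs_of_pos (by positivity : 0 < 2 * θ), sum_div]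
    _ ≤ 2 / (1 - rexp (-(θ * Δ))) / (2 * θ) := by gcongr
    _ = Δ / (1 - rexp (-(θ * Δ))) / (θ * Δ) := by field_simp
    _ ≤ (1 + θ) / θ / (θ * Δ) := by
        gcongr ?_ / (θ * Δ)
        exact div_one_sub_exp_neg_mul_le hθ hΔ hΔ1
    _ = (1 + θ) / θ ^ 2 / Δ := by field_simp

lemma abs_sum_sum_ouGridCov_sq_sub_le (hθ : 0 < θ) (hΔ : 0 < Δ) (n : ℕ) :
    |4 * θ ^ 2 * ∑ k, ∑ l, ouGridCov θ Δ n k l ^ 2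
        - n * ((1 + rexp (-(2 * θ * Δ))) / (1 - rexp (-(2 * θ * Δ))))|
      ≤ 4 / (1 - rexp (-(θ * Δ))) ^ 2 := by
  have hsq : rexp (-(2 * θ * Δ)) = rexp (-(θ * Δ)) ^ 2 := by
    rw [← Real.exp_nat_mul]
    congr 1
    push_cast
    ring
  have h := abs_sum_sum_autoregressiveCov_sq_sub_le (Real.exp_pos _).le
    (exp_neg_mul_lt_one hθ hΔ) n
  simp only [Finset.sum_range] at h
  convert h using 3
  · simp only [ouGridCov, div_pow, ← sum_div]
    field_simp
    ring
  · rw [hsq]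

lemma abs_mul_sum_sum_ouGridCov_sq_sub_le (hθ : 0 < θ) (hΔ : 0 < Δ) (hΔ1 : Δ ≤ 1) {n : ℕ}
    (hn : n ≠ 0) :
    |Δ / n * ∑ k, ∑ l, ouGridCov θ Δ n k l ^ 2 - 1 / (4 * θ ^ 3)|
      ≤ ((1 + θ) / θ ^ 2) ^ 2 / (n * Δ) + Δ / (2 * θ ^ 2) := by
  have hgrid := abs_sum_sum_ouGridCov_sq_sub_le hθ hΔ n
  have hmesh := abs_mul_one_add_exp_div_one_sub_exp_sub_le (by positivity : 0 < 2 * θ * Δ)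
  have hsub : 0 < 1 - rexp (-(θ * Δ)) := sub_pos.2 (exp_neg_mul_lt_one hθ hΔ)
  set S := ∑ k, ∑ l, ouGridCov θ Δ n k l ^ 2
  set c := (1 + rexp (-(2 * θ * Δ))) / (1 - rexp (-(2 * θ * Δ)))
  calc |Δ / n * S - 1 / (4 * θ ^ 3)|
      = |Δ / (4 * θ ^ 2 * n) * (4 * θ ^ 2 * S - n * c) + (2 * θ * Δ * c - 2) / (8 * θ ^ 3)| := by
        congr 1
        field_simp
        ring
    _ ≤ Δ / (4 * θ ^ 2 * n) * |4 * θ ^ 2 * S - n * c| + |2 * θ * Δ * c - 2| / (8 * θ ^ 3) := by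
        refine (abs_add_le _ _).trans_eq ?_
        rw [abs_mul, abs_div _ (8 * θ ^ 3), abs_of_pos (by positivity : 0 < 8 * θ ^ 3),
          abs_of_pos (by positivity : 0 < Δ / (4 * θ ^ 2 * n))]
    _ ≤ Δ / (4 * θ ^ 2 * n) * (4 / (1 - rexp (-(θ * Δ))) ^ 2)
          + 2 * (2 * θ * Δ) / (8 * θ ^ 3) := by gcongr
    _ = (Δ / (1 - rexp (-(θ * Δ)))) ^ 2 / θ ^ 2 / (n * Δ) + Δ / (2 * θ ^ 2) := by
        field_simp
        ring
    _ ≤ ((1 + θ) / θ) ^ 2 / θ ^ 2 / (n * Δ) + Δ / (2 * θ ^ 2) := by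
        gcongr ?_ ^ 2 / θ ^ 2 / (n * Δ) + Δ / (2 * θ ^ 2)
        exact div_one_sub_exp_neg_mul_le hθ hΔ hΔ1
    _ = ((1 + θ) / θ ^ 2) ^ 2 / (n * Δ) + Δ / (2 * θ ^ 2) := by
        field_simp

end OUGridCov

lemma ouGridCov_eq {θ Δ : ℝ} (hΔ : 0 ≤ Δ) {n : ℕ} (k l : Fin n) :
    ouGridCov θ Δ n k l
      = (rexp (-θ * |l * Δ - k * Δ|) - rexp (-θ * (l * Δ + k * Δ))) / (2 * θ) := by
  have hdist : |(l * Δ - k * Δ : ℝ)| = Nat.dist k l * Δ := by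
    rw [← sub_mul, abs_mul, abs_of_nonneg hΔ, abs_sub_comm]
    congr 1
    rcases le_total (k : ℕ) l with h | h
    · rw [Nat.dist_eq_sub_of_le h, Nat.cast_sub h, abs_sub_comm]
      exact abs_of_nonneg (sub_nonneg.2 (Nat.cast_le.2 h))
    · rw [Nat.dist_eq_sub_of_le_right h, Nat.cast_sub h]
      exact abs_of_nonneg (sub_nonneg.2 (Nat.cast_le.2 h))
  rw [hdist, ouGridCov, autoregressiveCov, ← Real.exp_nat_mul, ← Real.exp_nat_mul]
  congr 3 <;> push_cast <;> ring

namespace IsOUPair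

variable {θ : ℝ} {X : Fin 2 → ℝ → Ω → ℝ}

lemma isCenteredGaussian (hX : IsOUPair θ X) (i : Fin 2) {Δ : ℝ} (hΔ : 0 ≤ Δ) (n : ℕ) :
    IsCenteredGaussian (fun k : Fin n ↦ X i (k * Δ)) (ouGridCov θ Δ n) ℙ :=
  .of_map_dotProduct (fun _ ↦ (hX.meas i _).aemeasurable)
    (fun c ↦ hX.gaussian i n _ c fun _ ↦ by positivity)
    fun k l ↦ (hX.cov i _ _ (by positivity) (by positivity)).trans (ouGridCov_eq hΔ k l).symm

lemma indepFun_grid (hX : IsOUPair θ X) (Δ : ℝ) (n : ℕ) :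
    IndepFun (fun ω (k : Fin n) ↦ X 0 (k * Δ) ω) (fun ω (k : Fin n) ↦ X 1 (k * Δ) ω) ℙ := by
  have hgrid : Measurable fun (f : ℝ → ℝ) (k : Fin n) ↦ f (k * Δ) := by fun_prop
  exact hX.indep.comp hgrid hgrid

end IsOUPair

lemma ouYtilde_eq_center_dotProduct {α : Type} (X : Fin 2 → ℝ → α → ℝ) (i j : Fin 2) {n : ℕ}
    (hn : n ≠ 0) (Δ : ℝ) (ω : α) :
    ouYtilde X i j n Δ ω
      = Δ * (center (fun k : Fin n ↦ X j (k * Δ) ω) ⬝ᵥ fun k : Fin n ↦ X i (k * Δ) ω) := by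
  rw [dotProduct_comm]
  simp only [ouYtilde, ouXtilde, Finset.sum_range, center, dotProduct, mul_sub, sum_sub_distrib,
    ← sum_mul, Fintype.card_fin]
  field_simp

/-- The constant of `IsOUPair.dKol_ouYtilde_le`; here `(1 + θ) / θ ^ 2` bounds `Δ` times the
absolute row sums of `ouGridCov θ Δ n`. -/
def ouKolConst (θ : ℝ) : ℝ :=
  8 * θ ^ 3 * (√(((1 + θ) / θ ^ 2) ^ 3 / θ) + 4 * ((1 + θ) / θ ^ 2) ^ 2 + 1 / (2 * θ ^ 2))

lemma ouKolConst_pos {θ : ℝ} (hθ : 0 < θ) : 0 < ouKolConst θ := by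
  unfold ouKolConst
  positivity

lemma div_sqrt_sq_mul_sqrt_add {θ Δ κ n : ℝ} (hθ : 0 < θ) (hΔ : 0 < Δ) (hκ : 0 < κ) (hn : 0 < n) :
    (Δ / √(n * Δ)) ^ 2 * (√(2 * (1 / (2 * θ)) * n * (κ / Δ) ^ 3) + 3 * (κ / Δ) ^ 2)
      = √(κ ^ 3 / θ) / √(n * Δ) + 3 * κ ^ 2 / (n * Δ) := by
  have hsq : √(n * Δ) ^ 2 = n * Δ := Real.sq_sqrt (by positivity)
  have hsqrt : √(2 * (1 / (2 * θ)) * n * (κ / Δ) ^ 3) = √(κ ^ 3 / θ) * (√(n * Δ) / Δ ^ 2) := by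
    rw [← Real.sqrt_sq (by positivity : 0 ≤ √(n * Δ) / Δ ^ 2), ← Real.sqrt_mul (by positivity),
      div_pow (√_), hsq]
    congr 1
    field_simp
  rw [hsqrt, mul_add, div_pow]
  congr 1
  · field_simp
  · rw [hsq]
    field_simp

lemma eight_mul_cube_mul_le_ouKolConst_mul {θ Δ T : ℝ} (hθ : 0 < θ) (hΔ : 0 ≤ Δ) (hT : 1 ≤ T) :
    8 * θ ^ 3 * (√(((1 + θ) / θ ^ 2) ^ 3 / θ) / √T + 3 * ((1 + θ) / θ ^ 2) ^ 2 / T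
        + (((1 + θ) / θ ^ 2) ^ 2 / T + Δ / (2 * θ ^ 2)))
      ≤ ouKolConst θ * (1 / √T + Δ) := by
  have hinv : 1 / T ≤ 1 / √T := by
    gcongr
    exact Real.sqrt_le_self_iff.2 (.inr hT)
  rw [ouKolConst]
  set κ := (1 + θ) / θ ^ 2
  calc 8 * θ ^ 3 * (√(κ ^ 3 / θ) / √T + 3 * κ ^ 2 / T + (κ ^ 2 / T + Δ / (2 * θ ^ 2)))
      = 8 * θ ^ 3 * (√(κ ^ 3 / θ) * (1 / √T) + 4 * κ ^ 2 * (1 / T) + 1 / (2 * θ ^ 2) * Δ) := by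
        ring
    _ ≤ 8 * θ ^ 3 * (√(κ ^ 3 / θ) * (1 / √T + Δ) + 4 * κ ^ 2 * (1 / √T + Δ)
          + 1 / (2 * θ ^ 2) * (1 / √T + Δ)) := by
        gcongr
        · exact le_add_of_nonneg_right hΔ
        · exact hinv.trans (le_add_of_nonneg_right hΔ)
        · exact le_add_of_nonneg_left (by positivity)
    _ = 8 * θ ^ 3 * (√(κ ^ 3 / θ) + 4 * κ ^ 2 + 1 / (2 * θ ^ 2)) * (1 / √T + Δ) := by ring

lemma IsOUPair.dKol_ouYtilde_le {θ : ℝ} {X : Fin 2 → ℝ → Ω → ℝ} (hX : IsOUPair θ X) (hθ : 0 < θ)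
    {n : ℕ} {Δ : ℝ} (hΔ : 0 < Δ) (hΔ1 : Δ ≤ 1) (hT : 1 ≤ n * Δ) :
    dKol (Measure.map (fun ω ↦ ouYtilde X 0 1 n Δ ω / √(n * Δ)) ℙ)
        (gaussianReal 0 (1 / (4 * θ ^ 3)).toNNReal)
      ≤ ouKolConst θ * (1 / √(n * Δ) + Δ) := by
  have hn : n ≠ 0 := by
    rintro rfl
    norm_num at hT
  have := Fin.pos_iff_nonempty.1 (Nat.pos_of_ne_zero hn)
  have hw : 0 < 1 / (4 * θ ^ 3) := by positivity
  have hkol := (hX.isCenteredGaussian 0 hΔ.le n).dKol_map_center_dotProduct_le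
    (hX.isCenteredGaussian 1 hΔ.le n) (hX.indepFun_grid Δ n) (abs_ouGridCov_le hθ hΔ)
    (by positivity) (sum_abs_ouGridCov_le hθ hΔ hΔ1) (Δ / √(n * Δ)) (Real.toNNReal_pos.2 hw).ne'
  have hscale : (Δ / √(n * Δ)) ^ 2 = Δ / n := by
    rw [div_pow, Real.sq_sqrt (by positivity)]
    field_simp
  rw [Fintype.card_fin, Real.coe_toNNReal _ hw.le,
    div_sqrt_sq_mul_sqrt_add hθ hΔ (by positivity) (by positivity), hscale,
    show 2 / (1 / (4 * θ ^ 3)) = 8 * θ ^ 3 by field_simp; norm_num] at hkol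
  simp only [ouYtilde_eq_center_dotProduct X 0 1 hn, mul_div_right_comm]
  refine hkol.trans (le_trans ?_ (eight_mul_cube_mul_le_ouKolConst_mul hθ hΔ.le hT))
  gcongr
  exact abs_mul_sum_sum_ouGridCov_sq_sub_le hθ hΔ hΔ1 hn

lemma le_mul_sq_rpow_one_third {a Δ : ℝ} (hΔ : 0 ≤ Δ) (hΔ1 : Δ ≤ 1)
    (ha : 1 ≤ a * Δ) : Δ ≤ (a * Δ ^ 2) ^ ((1 : ℝ) / 3) := by
  have hcube : Δ ^ 3 ≤ a * Δ ^ 2 := by nlinarith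
  rw [one_div, Real.le_rpow_inv_iff_of_pos hΔ ((pow_nonneg hΔ 3).trans hcube) three_pos]
  exact_mod_cast hcube

lemma one_div_sqrt_add_le_two_mul_log_mul_max {a Δ : ℝ} (hΔ : 0 ≤ Δ) (hΔ1 : Δ ≤ 1)
    (ha : rexp 1 ≤ a * Δ) :
    1 / √(a * Δ) + Δ
      ≤ 2 * (Real.log (a * Δ) * max (1 / √(a * Δ)) ((a * Δ ^ 2) ^ ((1 : ℝ) / 3))) := by
  have hlog : 1 ≤ Real.log (a * Δ) := (Real.le_log_iff_exp_le ((Real.exp_pos 1).trans_le ha)).2 ha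
  have hcube := le_mul_sq_rpow_one_third hΔ hΔ1 ((Real.one_le_exp zero_le_one).trans ha)
  set M := max (1 / √(a * Δ)) ((a * Δ ^ 2) ^ ((1 : ℝ) / 3))
  have hM : M ≤ Real.log (a * Δ) * M :=
    le_mul_of_one_le_left (hΔ.trans (hcube.trans (le_max_right _ _))) hlog
  rw [two_mul]
  exact add_le_add ((le_max_left _ _).trans hM) ((hcube.trans (le_max_right _ _)).trans hM)

end

theorem stmt_13_general (θ : ℝ) (hθ : 0 < θ) (X : Fin 2 → ℝ → Ω → ℝ) (hX : IsOUPair θ X)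
    (Δ : ℕ → ℝ) (hΔ0 : Tendsto Δ atTop (𝓝 0))
    (hT : Tendsto (fun n : ℕ ↦ (n : ℝ) * Δ n) atTop atTop) :
    (∃ c : ℝ, 0 < c ∧ ∃ n₀ : ℕ, ∀ n : ℕ, n₀ ≤ n →
      dKol (Measure.map (fun ω ↦ ouYtilde X 0 1 n (Δ n) ω / Real.sqrt ((n : ℝ) * Δ n)) ℙ)
          (gaussianReal 0 (Real.toNNReal (1 / (4 * θ ^ 3))))
        ≤ c * Real.log ((n : ℝ) * Δ n)
            * max (1 / Real.sqrt ((n : ℝ) * Δ n)) (((n : ℝ) * (Δ n) ^ 2) ^ ((1 : ℝ) / 3))) ∧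
    Tendsto (fun n : ℕ ↦
        dKol (Measure.map (fun ω ↦ ouYtilde X 0 1 n (Δ n) ω / Real.sqrt ((n : ℝ) * Δ n)) ℙ)
          (gaussianReal 0 (Real.toNNReal (1 / (4 * θ ^ 3))))) atTop (𝓝 0) := by
  have hmesh : ∀ᶠ n in atTop, 0 < Δ n ∧ Δ n ≤ 1 ∧ rexp 1 ≤ n * Δ n := by
    filter_upwards [hΔ0.eventually_le_const zero_lt_one, hT.eventually_ge_atTop (rexp 1)]
      with n hΔ1 hTn
    exact ⟨pos_of_mul_pos_right ((Real.exp_pos 1).trans_le hTn) n.cast_nonneg, hΔ1, hTn⟩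
  have hkol : ∀ᶠ n in atTop, dKol
      (Measure.map (fun ω ↦ ouYtilde X 0 1 n (Δ n) ω / √(n * Δ n)) ℙ)
        (gaussianReal 0 (1 / (4 * θ ^ 3)).toNNReal) ≤ ouKolConst θ * (1 / √(n * Δ n) + Δ n) :=
    hmesh.mono fun n ⟨hΔ, hΔ1, hTn⟩ ↦
      hX.dKol_ouYtilde_le hθ hΔ hΔ1 ((Real.one_le_exp zero_le_one).trans hTn)
  constructor
  · refine ⟨2 * ouKolConst θ, mul_pos two_pos (ouKolConst_pos hθ), eventually_atTop.1 ?_⟩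
    filter_upwards [hmesh, hkol] with n ⟨hΔ, hΔ1, hTn⟩ hn
    refine (hn.trans ?_)
    rw [mul_comm 2, mul_assoc, mul_assoc]
    gcongr
    · exact (ouKolConst_pos hθ).le
    · exact one_div_sqrt_add_le_two_mul_log_mul_max hΔ.le hΔ1 hTn
  · refine squeeze_zero' (.of_forall fun n ↦ Real.iSup_nonneg fun z ↦ abs_nonneg _) hkol ?_
    have hinv : Tendsto (fun n : ℕ ↦ 1 / √(n * Δ n)) atTop (𝓝 0) := by
      simp only [one_div]
      exact tendsto_inv_atTop_zero.comp (Real.tendsto_sqrt_atTop.comp hT)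
    simpa using (hinv.add hΔ0).const_mul (ouKolConst θ)

/-- if `Δₙ → 0` and `nΔₙ → ∞`, there are `c(θ) > 0` and `n₀` such that
for `n ≥ n₀`, `d_Kol(Ỹ₁₂(n)/√Tₙ, N(0,1/(4θ³))) ≤ c(θ)·ln(nΔₙ)·max((nΔₙ)^{−1/2}, (nΔₙ²)^{1/3})`;
in particular if additionally `nΔₙ² → 0` then `Ỹ₁₂(n)/√Tₙ ⇒ N(0,1/(4θ³))`. -/
theorem stmt_13 (θ : ℝ) (hθ : 0 < θ) [IsProbabilityMeasure (ℙ : Measure Ω)]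
    (X : Fin 2 → ℝ → Ω → ℝ) (hX : IsOUPair θ X)
    (Δ : ℕ → ℝ) (hΔpos : ∀ n, 0 < Δ n) (hΔ0 : Tendsto Δ atTop (𝓝 0))
    (hT : Tendsto (fun n : ℕ => (n : ℝ) * Δ n) atTop atTop) :
    (∃ c : ℝ, 0 < c ∧ ∃ n₀ : ℕ, ∀ n : ℕ, n₀ ≤ n →
      dKol (Measure.map (fun ω => ouYtilde X 0 1 n (Δ n) ω / Real.sqrt ((n : ℝ) * Δ n)) ℙ)
          (gaussianReal 0 (Real.toNNReal (1 / (4 * θ ^ 3))))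
        ≤ c * Real.log ((n : ℝ) * Δ n)
            * max (1 / Real.sqrt ((n : ℝ) * Δ n)) (((n : ℝ) * (Δ n) ^ 2) ^ ((1 : ℝ) / 3))) ∧
    (Tendsto (fun n : ℕ => (n : ℝ) * (Δ n) ^ 2) atTop (𝓝 0) →
      Tendsto (fun n : ℕ =>
          dKol (Measure.map (fun ω => ouYtilde X 0 1 n (Δ n) ω / Real.sqrt ((n : ℝ) * Δ n)) ℙ)
            (gaussianReal 0 (Real.toNNReal (1 / (4 * θ ^ 3))))) atTop (𝓝 0)) := by
  exact (stmt_13_general θ hθ X hX Δ hΔ0 hT).imp_right fun h _ ↦ h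

end
end

section
/- Let (Δₙ)_{n≥1} be a sequence of positive meshes with Δₙ → 0 and nΔₙ → ∞ as n → ∞. For every θ > 0 and every real p ≥ 1 there exist a constant c(p,θ) > 0 and n₀ ∈ ℕ such that for all n ≥ n₀, ( E[ | 2θ·√( (Ỹ₁₁(n)/Tₙ) · (Ỹ₂₂(n)/Tₙ) ) − 1 |^p ] )^{1/p} ≤ c(p,θ) · Tₙ^{−1/2}. -/
open MeasureTheory ProbabilityTheory Real Filter Finset
open scoped Topology ENNReal NNReal

noncomputable section

variable {Ω : Type} [MeasureSpace Ω]

/-!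
Put `Z k = √(2θ) X(kΔ)` and `r = exp (-θΔ)`. Then `2θ Ỹᵢᵢ / T` is the empirical variance of a
centred Gaussian vector with `|cov (Z j) (Z k)| ≤ r ^ |j - k|` and `Var (Z k) = 1 - r ^ (2 * k)`.

For a centred Gaussian vector `G` with covariance matrix `S`, diagonalising `S` turns
`∑ G k ^ 2 - tr S` into a sum of independent centred multiples of `χ²` variables; its exponential
moment is bounded at the scale `1 / ‖S‖_F` (Frobenius norm), whence
`‖∑ G k ^ 2 - tr S‖_p ≤ 12 p ‖S‖_F`. The square of the sample mean is the square of one Gaussian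
variable.

Summing geometric series, the fluctuation of the squares, the squared mean and the bias
`E[Z k ^ 2] - 1` each contribute `O(τ)` with `τ² = 2 / (n (1 - r))`; the last two are in fact
`O(min 1 τ²)`. Since `1 - r ≥ θΔ / (1 + θΔ)`, `τ` is of order `T ^ (-1/2)` for bounded `Δ`. Finally
`|√(a b) - 1| ≤ max |a - 1| |b - 1|` passes from each empirical variance to the product.
-/

section GaussianQuadraticForm

lemma exp_neg_add_two_mul_sq_le {y : ℝ} (hy : y ≤ 1 / 2) : exp (-(y + 2 * y ^ 2)) ≤ 1 - y := by
  have hexp : y + 2 * y ^ 2 + 1 ≤ exp (y + 2 * y ^ 2) := add_one_le_exp _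
  rw [exp_neg]
  refine inv_le_of_inv_le₀ (by linarith) (le_trans ?_ hexp)
  rw [inv_le_iff_one_le_mul₀ (by linarith)]
  nlinarith [mul_nonneg (sq_nonneg y) (by linarith : 0 ≤ 1 - 2 * y)]

lemma mgf_sq_gaussianReal {v : ℝ≥0} {s : ℝ} (hs : 2 * (s * v) < 1) :
    mgf (fun x ↦ x ^ 2) (gaussianReal 0 v) s = (√(1 - 2 * (s * v)))⁻¹ := by
  rcases eq_or_ne v 0 with rfl | hv
  · simp [mgf]
  set b : ℝ := (1 - 2 * (s * v)) / (2 * v) with hb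
  have hdensity (x : ℝ) : gaussianPDFReal 0 v x * exp (s * x ^ 2)
      = (√(2 * π * v))⁻¹ * exp (-b * x ^ 2) := by
    rw [gaussianPDFReal, mul_assoc, ← exp_add, hb]
    congr 2
    field_simp
    ring
  simp only [mgf, integral_gaussianReal_eq_integral_smul hv, smul_eq_mul, hdensity]
  rw [integral_const_mul, integral_gaussian, ← sqrt_inv, ← sqrt_inv, ← sqrt_mul (by positivity), hb]
  have : 1 - 2 * (s * v) ≠ 0 := by linarith
  congr 1
  field_simp

variable {Ω ι : Type*} [MeasurableSpace Ω] {P : Measure Ω}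

lemma mgf_sq_sub_variance_pos_and_le {W : Ω → ℝ} {v : ℝ≥0} {s : ℝ}
    (hW : HasLaw W (gaussianReal 0 v) P) (hs : s * v ≤ 1 / 4) :
    0 < mgf (fun ω ↦ W ω ^ 2 - v) P s ∧
      mgf (fun ω ↦ W ω ^ 2 - v) P s ≤ exp (4 * (s * v) ^ 2) := by
  have hmgf : mgf (fun ω ↦ W ω ^ 2 - v) P s = (√(1 - 2 * (s * v)))⁻¹ * exp (-(s * v)) := by
    rw [← mgf_sq_gaussianReal (by linarith), ← hW.map_eq, mgf_map hW.aemeasurable (by fun_prop)]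
    simpa [sub_eq_add_neg, Function.comp_def] using mgf_add_const (X := fun ω ↦ W ω ^ 2) (-(v : ℝ))
  have hpos : 0 < √(1 - 2 * (s * v)) := sqrt_pos.2 (by linarith)
  have hsqrt : exp (-(s * v) - 4 * (s * v) ^ 2) ≤ √(1 - 2 * (s * v)) := by
    refine le_sqrt_of_sq_le ((le_of_eq ?_).trans <|
      exp_neg_add_two_mul_sq_le (y := 2 * (s * v)) (by linarith))
    rw [← exp_nat_mul]
    push_cast
    ring_nf
  rw [hmgf]
  refine ⟨by positivity, ?_⟩
  rw [inv_mul_le_iff₀ hpos]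
  calc exp (-(s * v)) = exp (-(s * v) - 4 * (s * v) ^ 2) * exp (4 * (s * v) ^ 2) := by
        rw [← exp_add]; ring_nf
    _ ≤ _ := by gcongr

lemma mgf_sum_sq_sub_variance_pos_and_le [Fintype ι] {W : ι → Ω → ℝ} {v : ι → ℝ≥0} {s : ℝ}
    (hindep : iIndepFun W P) (hW : ∀ i, HasLaw (W i) (gaussianReal 0 (v i)) P)
    (hs : ∀ i, s * v i ≤ 1 / 4) :
    0 < mgf (fun ω ↦ ∑ i, (W i ω ^ 2 - v i)) P s ∧
      mgf (fun ω ↦ ∑ i, (W i ω ^ 2 - v i)) P s ≤ exp (4 * s ^ 2 * ∑ i, (v i : ℝ) ^ 2) := by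
  have hprod : mgf (fun ω ↦ ∑ i, (W i ω ^ 2 - v i)) P s
      = ∏ i, mgf (fun ω ↦ W i ω ^ 2 - v i) P s := by
    have hindep_sq : iIndepFun (fun i ω ↦ W i ω ^ 2 - v i) P :=
      hindep.comp (fun i x ↦ x ^ 2 - v i) fun i ↦ by fun_prop
    have hmeas (i : ι) : AEMeasurable (fun ω ↦ W i ω ^ 2 - v i) P :=
      ((hW i).aemeasurable.pow_const 2).sub_const _
    rw [← hindep_sq.mgf_sum₀ hmeas]
    congr 1
    ext ω
    simp
  rw [hprod, mul_sum, exp_sum]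
  refine ⟨prod_pos fun i _ ↦ (mgf_sq_sub_variance_pos_and_le (hW i) (hs i)).1, ?_⟩
  refine prod_le_prod (fun i _ ↦ mgf_nonneg) fun i _ ↦ ?_
  refine (mgf_sq_sub_variance_pos_and_le (hW i) (hs i)).2.trans_eq ?_
  ring_nf

lemma eLpNorm_le_of_mgf_add_mgf_neg_le {Y : Ω → ℝ} {p t M : ℝ} (hp : 0 < p) (ht : 0 < t)
    (hint : Integrable (fun ω ↦ exp (t * Y ω)) P)
    (hint_neg : Integrable (fun ω ↦ exp (-t * Y ω)) P) (hM : mgf Y P t + mgf Y P (-t) ≤ M) :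
    eLpNorm Y (ENNReal.ofReal p) P ≤ ENNReal.ofReal (p / t * M ^ (1 / p)) := by
  have hM_nonneg : 0 ≤ M := (add_nonneg mgf_nonneg mgf_nonneg).trans hM
  have hpow (ω : Ω) : ‖Y ω‖ₑ ^ p
      ≤ ENNReal.ofReal ((p / t) ^ p * (exp (t * Y ω) + exp (-t * Y ω))) := by
    rw [← ofReal_norm, ENNReal.ofReal_rpow_of_nonneg (norm_nonneg _) hp.le, norm_eq_abs]
    refine ENNReal.ofReal_le_ofReal ((rpow_abs_le_mul_max_exp_of_pos _ hp.le ht).trans ?_)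
    gcongr
    exact max_le_add_of_nonneg (exp_nonneg _) (exp_nonneg _)
  rw [eLpNorm_eq_lintegral_rpow_enorm_toReal (by simpa) ENNReal.ofReal_ne_top,
    ENNReal.toReal_ofReal hp.le]
  calc (∫⁻ ω, ‖Y ω‖ₑ ^ p ∂P) ^ (1 / p)
      ≤ (∫⁻ ω, ENNReal.ofReal ((p / t) ^ p * (exp (t * Y ω) + exp (-t * Y ω))) ∂P) ^ (1 / p) := by
        gcongr with ω
        exact hpow ω
    _ = ENNReal.ofReal ((p / t) ^ p * (mgf Y P t + mgf Y P (-t))) ^ (1 / p) := by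
        have hint_add : Integrable (fun ω ↦ exp (t * Y ω) + exp (-t * Y ω)) P := hint.add hint_neg
        rw [← ofReal_integral_eq_lintegral_ofReal (hint_add.const_mul _)
          (ae_of_all _ fun ω ↦ by positivity), integral_const_mul, integral_add hint hint_neg]
        rfl
    _ ≤ ENNReal.ofReal ((p / t) ^ p * M) ^ (1 / p) := by gcongr
    _ = ENNReal.ofReal (p / t * M ^ (1 / p)) := by
        rw [ENNReal.ofReal_rpow_of_nonneg (by positivity) (by positivity),
          mul_rpow (by positivity) hM_nonneg, one_div, rpow_rpow_inv (by positivity) hp.ne']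

lemma eLpNorm_sum_sq_sub_variance_le_of_iIndepFun [Fintype ι] {W : ι → Ω → ℝ} {v : ι → ℝ≥0}
    {p F : ℝ} (hindep : iIndepFun W P) (hW : ∀ i, HasLaw (W i) (gaussianReal 0 (v i)) P)
    (hp : 1 ≤ p) (hF : 0 < F) (hv : ∑ i, (v i : ℝ) ^ 2 ≤ F ^ 2) :
    eLpNorm (fun ω ↦ ∑ i, (W i ω ^ 2 - v i)) (ENNReal.ofReal p) P
      ≤ ENNReal.ofReal (12 * p * F) := by
  have := hindep.isProbabilityMeasure
  set Q : Ω → ℝ := fun ω ↦ ∑ i, (W i ω ^ 2 - v i)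
  have hv_le (i : ι) : (v i : ℝ) ≤ F := by
    refine le_of_sq_le_sq ?_ hF.le
    exact (single_le_sum (f := fun i ↦ (v i : ℝ) ^ 2) (fun _ _ ↦ sq_nonneg _)
      (mem_univ i)).trans hv
  have hmgf {s : ℝ} (hs : |s| = 1 / (4 * F)) : 0 < mgf Q P s ∧ mgf Q P s ≤ 3 / 2 := by
    have hs_mul (i : ι) : s * v i ≤ 1 / 4 :=
      calc s * v i ≤ 1 / (4 * F) * F := by
            gcongr
            exacts [hs ▸ le_abs_self s, hv_le i]
        _ = 1 / 4 := by field_simp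
    obtain ⟨hpos, hle⟩ := mgf_sum_sq_sub_variance_pos_and_le hindep hW hs_mul
    refine ⟨hpos, hle.trans ?_⟩
    calc exp (4 * s ^ 2 * ∑ i, (v i : ℝ) ^ 2) ≤ exp (4 * (1 / (4 * F)) ^ 2 * F ^ 2) := by
          rw [← sq_abs s, hs]; gcongr
      _ = exp (1 / 4) := by congr 1; field_simp
      _ ≤ 1 / (1 - 1 / 4) := exp_bound_div_one_sub_of_interval (by norm_num) (by norm_num)
      _ ≤ 3 / 2 := by norm_num
  obtain ⟨hpos, hle⟩ := hmgf (s := 1 / (4 * F)) (abs_of_pos (by positivity))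
  obtain ⟨hpos', hle'⟩ := hmgf (s := -(1 / (4 * F))) (by rw [abs_neg, abs_of_pos (by positivity)])
  refine (eLpNorm_le_of_mgf_add_mgf_neg_le (M := 3) (by positivity) (by positivity)
    (mgf_pos_iff.1 hpos) (mgf_pos_iff.1 hpos') (by linarith)).trans (ENNReal.ofReal_le_ofReal ?_)
  have hroot : (3 : ℝ) ^ (1 / p) ≤ 3 :=
    rpow_le_self_of_one_le (by norm_num) ((div_le_one (by linarith)).2 hp)
  calc p / (1 / (4 * F)) * 3 ^ (1 / p) ≤ p / (1 / (4 * F)) * 3 := by gcongr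
    _ = 12 * p * F := by field_simp; norm_num

lemma sum_eigenvalues_sq [Fintype ι] [DecidableEq ι] {A : Matrix ι ι ℝ} (hA : A.IsHermitian) :
    ∑ i, hA.eigenvalues i ^ 2 = ∑ i, ∑ j, A i j ^ 2 := by
  set u := hA.eigenvectorBasis
  have hrow (i j : ι) : inner ℝ (u j) (WithLp.toLp 2 (A i)) = hA.eigenvalues j * u j i := by
    simpa [Matrix.mulVec, dotProduct, PiLp.inner_apply]
      using congrFun (hA.mulVec_eigenvectorBasis j) i
  have hnorm (j : ι) : ∑ i, u j i ^ 2 = 1 := by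
    rw [← EuclideanSpace.real_norm_sq_eq, u.norm_eq_one, one_pow]
  calc ∑ j, hA.eigenvalues j ^ 2 = ∑ j, ∑ i, inner ℝ (u j) (WithLp.toLp 2 (A i)) ^ 2 := by
        simp only [hrow, mul_pow, ← mul_sum, hnorm, mul_one]
    _ = ∑ i, ∑ j, A i j ^ 2 := by
        rw [sum_comm]
        simp only [u.sum_sq_inner_right, EuclideanSpace.real_norm_sq_eq]

end GaussianQuadraticForm

section Diagonalization

variable {Ω ι : Type*} [MeasurableSpace Ω] {P : Measure Ω} [Fintype ι] {G : ι → Ω → ℝ}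

lemma covariance_sum_mul_sum_mul_of_eigenvector [IsFiniteMeasure P]
    (hG : ∀ i, MemLp (G i) 2 P) (a : ι → ℝ) {b : ι → ℝ} {l : ℝ}
    (hb : (Matrix.of fun i j ↦ cov[G i, G j; P]).mulVec b = l • b) :
    cov[fun ω ↦ ∑ i, a i * G i ω, fun ω ↦ ∑ i, b i * G i ω; P] = l * ∑ i, a i * b i := by
  have hb_apply (i : ι) : ∑ j, cov[G i, G j; P] * b j = l * b i := congrFun hb i
  rw [covariance_fun_sum_fun_sum (fun i ↦ (hG i).const_mul _) fun i ↦ (hG i).const_mul _, mul_sum]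
  refine sum_congr rfl fun i _ ↦ ?_
  simp only [covariance_const_mul_left, covariance_const_mul_right]
  simp only [mul_left_comm l, ← hb_apply, mul_sum, mul_comm (b _), mul_assoc]

theorem exists_iIndepFun_gaussianReal_of_hasGaussianLaw
    (hG : HasGaussianLaw (fun ω ↦ (G · ω)) P) (hmean : ∀ i, P[G i] = 0) :
    ∃ (W : ι → Ω → ℝ) (v : ι → ℝ≥0), iIndepFun W P ∧
      (∀ i, HasLaw (W i) (gaussianReal 0 (v i)) P) ∧
      (∀ ω, ∑ i, W i ω ^ 2 = ∑ i, G i ω ^ 2) ∧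
      ∑ i, (v i : ℝ) = ∑ i, Var[G i; P] ∧
      ∑ i, (v i : ℝ) ^ 2 = ∑ i, ∑ j, cov[G i, G j; P] ^ 2 := by
  classical
  have := hG.isProbabilityMeasure
  have hG_memLp (i : ι) : MemLp (G i) 2 P := (hG.eval i).memLp_two
  set S : Matrix ι ι ℝ := .of fun i j ↦ cov[G i, G j; P]
  have hS : S.IsHermitian := by ext i j; simp [S, covariance_comm (G i)]
  set u := hS.eigenvectorBasis
  set W : ι → Ω → ℝ := fun j ω ↦ inner ℝ (u j) (WithLp.toLp 2 (G · ω))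
  have hW_sum (j : ι) : W j = fun ω ↦ ∑ k, u j k * G k ω := by
    simp [W, PiLp.inner_apply, mul_comm]
  have hW_cov (i j : ι) : cov[W i, W j; P] = hS.eigenvalues j * if i = j then 1 else 0 := by
    rw [hW_sum, hW_sum, covariance_sum_mul_sum_mul_of_eigenvector hG_memLp _
      (hS.mulVec_eigenvectorBasis j), ← orthonormal_iff_ite.1 u.orthonormal i j,
      PiLp.inner_apply]
    simp [u, mul_comm]
  have hW_gaussian : HasGaussianLaw (fun ω ↦ (W · ω)) P :=
    (hG.toLp_pi 2).map (.pi fun j ↦ innerSL ℝ (u j))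
  have hW_mean (j : ι) : P[W j] = 0 := by
    rw [hW_sum, integral_finsetSum _ fun k _ ↦ (hG.eval k).integrable.const_mul _]
    simp [integral_const_mul, hmean]
  have hW_var (j : ι) : (Var[W j; P].toNNReal : ℝ) = hS.eigenvalues j := by
    rw [coe_toNNReal _ (variance_nonneg _ _), ← covariance_self (hW_gaussian.eval j).aemeasurable]
    simp [hW_cov]
  refine ⟨W, fun j ↦ Var[W j; P].toNNReal,
    hW_gaussian.iIndepFun_of_covariance_eq_zero fun i j hij ↦ by simp [hW_cov, hij],
    fun j ↦ ⟨(hW_gaussian.eval j).aemeasurable, ?_⟩, fun ω ↦ ?_, ?_, ?_⟩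
  · rw [(hW_gaussian.eval j).map_eq_gaussianReal, hW_mean]
  · rw [u.sum_sq_inner_right, EuclideanSpace.real_norm_sq_eq]
  · simp only [hW_var, ← covariance_self (hG.eval _).aemeasurable]
    simpa [Matrix.trace, S] using hS.trace_eq_sum_eigenvalues.symm
  · simp only [hW_var, sum_eigenvalues_sq, S, Matrix.of_apply]

theorem eLpNorm_sum_sq_sub_variance_le {p F : ℝ} (hG : HasGaussianLaw (fun ω ↦ (G · ω)) P)
    (hmean : ∀ i, P[G i] = 0) (hp : 1 ≤ p) (hF : 0 < F)
    (hcov : ∑ i, ∑ j, cov[G i, G j; P] ^ 2 ≤ F ^ 2) :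
    eLpNorm (fun ω ↦ ∑ i, (G i ω ^ 2 - Var[G i; P])) (ENNReal.ofReal p) P
      ≤ ENNReal.ofReal (12 * p * F) := by
  obtain ⟨W, v, hindep, hlaw, hsq, htrace, hfrob⟩ :=
    exists_iIndepFun_gaussianReal_of_hasGaussianLaw hG hmean
  simpa only [sum_sub_distrib, hsq, htrace] using
    eLpNorm_sum_sq_sub_variance_le_of_iIndepFun hindep hlaw hp hF (hfrob.trans_le hcov)

end Diagonalization

section GeometricSum

lemma geom_sum_le_inv {r : ℝ} (hr0 : 0 ≤ r) (hr1 : r < 1) (n : ℕ) :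
    ∑ k ∈ range n, r ^ k ≤ (1 - r)⁻¹ := by
  rw [inv_eq_one_div, le_div_iff₀ (by linarith), geom_sum_mul_neg]
  linarith [pow_nonneg hr0 n]

lemma sum_pow_dist_le_s16 {r : ℝ} (hr0 : 0 ≤ r) (hr1 : r < 1) {j n : ℕ} (hj : j ≤ n) :
    ∑ k ∈ range n, r ^ j.dist k ≤ 2 / (1 - r) := by
  obtain ⟨m, rfl⟩ := Nat.exists_eq_add_of_le hj
  have hleft : ∑ k ∈ range j, r ^ j.dist k ≤ (1 - r)⁻¹ := by
    rw [← sum_range_reflect]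
    refine (sum_le_sum fun k hk ↦ ?_).trans (geom_sum_le_inv hr0 hr1 j)
    have hk : k < j := mem_range.1 hk
    refine pow_le_pow_of_le_one hr0 hr1.le ?_
    rw [Nat.dist_eq_sub_of_le_right (by lia)]
    lia
  have hright : ∑ k ∈ range m, r ^ j.dist (j + k) ≤ (1 - r)⁻¹ := by
    simpa [Nat.dist_eq_sub_of_le] using geom_sum_le_inv hr0 hr1 m
  rw [sum_range_add]
  calc _ ≤ (1 - r)⁻¹ + (1 - r)⁻¹ := add_le_add hleft hright
    _ = 2 / (1 - r) := by ring

lemma sum_sum_pow_dist_le {r : ℝ} (hr0 : 0 ≤ r) (hr1 : r < 1) (n : ℕ) :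
    ∑ j : Fin n, ∑ k : Fin n, r ^ (j : ℕ).dist k ≤ n * (2 / (1 - r)) := by
  calc ∑ j : Fin n, ∑ k : Fin n, r ^ (j : ℕ).dist k ≤ ∑ _j : Fin n, 2 / (1 - r) :=
        sum_le_sum fun j _ ↦ (Fin.sum_univ_eq_sum_range (fun k ↦ r ^ (j : ℕ).dist k) n).trans_le
          (sum_pow_dist_le_s16 hr0 hr1 j.2.le)
    _ = n * (2 / (1 - r)) := by simp

end GeometricSum

section EmpiricalVariance

/-- The empirical variance of a finite sample `x`: the mean of the squares minus the square of the
mean. It is `0` on the empty sample. -/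
def empVar {ι : Type*} [Fintype ι] (x : ι → ℝ) : ℝ :=
  (∑ k, x k ^ 2) / Fintype.card ι - ((∑ k, x k) / Fintype.card ι) ^ 2

lemma empVar_nonneg {ι : Type*} [Fintype ι] (x : ι → ℝ) : 0 ≤ empVar x := by
  rcases isEmpty_or_nonempty ι with _ | _
  · simp [empVar]
  · have hcard : (0 : ℝ) < Fintype.card ι := by exact_mod_cast Fintype.card_pos
    rw [empVar, sub_nonneg, div_pow, div_le_div_iff₀ (by positivity) hcard]
    have := sq_sum_le_card_mul_sum_sq (s := univ) (f := x)
    rw [card_univ] at this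
    nlinarith

lemma empVar_const_mul {ι : Type*} [Fintype ι] (c : ℝ) (x : ι → ℝ) :
    empVar (fun k ↦ c * x k) = c ^ 2 * empVar x := by
  simp only [empVar, mul_pow, ← mul_sum]
  ring

lemma measurable_empVar {ι : Type*} [Fintype ι] : Measurable (empVar : (ι → ℝ) → ℝ) := by
  unfold empVar
  fun_prop

lemma abs_sqrt_mul_sub_one_le {a b : ℝ} (ha : 0 ≤ a) (hb : 0 ≤ b) :
    |√(a * b) - 1| ≤ max |a - 1| |b - 1| := by
  wlog hab : a ≤ b generalizing a b
  · rw [mul_comm, max_comm]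
    exact this hb ha (le_of_not_ge hab)
  have hle_sqrt : a ≤ √(a * b) := le_sqrt_of_sq_le (by nlinarith)
  have hsqrt_le : √(a * b) ≤ b := (sqrt_le_left hb).2 (by nlinarith)
  exact abs_le_max_abs_abs (sub_le_sub_right hle_sqrt 1) (sub_le_sub_right hsqrt_le 1)

lemma le_of_le_one_of_le_sq {x t : ℝ} (ht : 0 ≤ t) (hx_one : x ≤ 1) (hx_sq : x ≤ t ^ 2) :
    x ≤ t := by
  rcases le_total t 1 with h | h <;> nlinarith

lemma abs_mean_le_of_sum_abs_le {ι : Type*} [Fintype ι] [Nonempty ι] {x : ι → ℝ} {t : ℝ}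
    (ht : 0 ≤ t) (hx_le : ∀ i, |x i| ≤ 1) (hx_sum : ∑ i, |x i| ≤ Fintype.card ι * t ^ 2) :
    |(∑ i, x i) / Fintype.card ι| ≤ t := by
  have hcard : (0 : ℝ) < Fintype.card ι := by exact_mod_cast Fintype.card_pos
  have habs : |(∑ i, x i) / Fintype.card ι| ≤ (∑ i, |x i|) / Fintype.card ι := by
    rw [abs_div, abs_of_pos hcard]
    gcongr
    exact abs_sum_le_sum_abs _ _
  refine le_of_le_one_of_le_sq ht (habs.trans ?_) (habs.trans ?_)
  · rw [div_le_one hcard]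
    exact (sum_le_sum fun i _ ↦ hx_le i).trans_eq (by simp)
  · rwa [div_le_iff₀' hcard]

variable {Ω ι : Type*} [MeasurableSpace Ω] {P : Measure Ω}

lemma eLpNorm_sq_le_of_hasGaussianLaw {X : Ω → ℝ} {p F : ℝ} (hX : HasGaussianLaw X P)
    (hmean : P[X] = 0) (hp : 1 ≤ p) (hF : 0 < F) (hvar : Var[X; P] ≤ F) :
    eLpNorm (fun ω ↦ X ω ^ 2) (ENNReal.ofReal p) P ≤ ENNReal.ofReal ((12 * p + 1) * F) := by
  have := hX.isProbabilityMeasure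
  have hX_family : HasGaussianLaw (fun ω (_ : Unit) ↦ X ω) P :=
    hX.map_fun (F := Unit → ℝ) (.pi fun _ ↦ .id ℝ ℝ)
  have hcentered := eLpNorm_sum_sq_sub_variance_le hX_family (fun _ ↦ hmean) hp hF <| by
    simpa [covariance_self hX.aemeasurable] using
      pow_le_pow_left₀ (variance_nonneg X P) hvar 2
  have hconst : eLpNorm (fun _ ↦ Var[X; P]) (ENNReal.ofReal p) P ≤ ENNReal.ofReal F :=
    (eLpNorm_le_of_ae_bound (C := F) (ae_of_all _ fun _ ↦ by
      rwa [norm_of_nonneg (variance_nonneg X P)])).trans_eq (by simp)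
  have hmeas : AEMeasurable X P := hX.aemeasurable
  calc eLpNorm (fun ω ↦ X ω ^ 2) (ENNReal.ofReal p) P
      = eLpNorm ((fun ω ↦ X ω ^ 2 - Var[X; P]) + fun _ ↦ Var[X; P]) (ENNReal.ofReal p) P := by
        congr 1; ext ω; simp
    _ ≤ ENNReal.ofReal (12 * p * F) + ENNReal.ofReal F :=
        (eLpNorm_add_le (by fun_prop) (by fun_prop) (by simpa)).trans
          (add_le_add (by simpa using hcentered) hconst)
    _ = ENNReal.ofReal ((12 * p + 1) * F) := by
        rw [← ENNReal.ofReal_add (by positivity) hF.le]; ring_nf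

lemma integral_abs_rpow_le_of_eLpNorm_le {f : Ω → ℝ} {p C : ℝ} (hp : 0 < p) (hC : 0 ≤ C)
    (hf : AEStronglyMeasurable f P) (h : eLpNorm f (ENNReal.ofReal p) P ≤ ENNReal.ofReal C) :
    (∫ ω, |f ω| ^ p ∂P) ^ (1 / p) ≤ C := by
  have hlpNorm := lpNorm_eq_integral_norm_rpow_toReal (by simpa) ENNReal.ofReal_ne_top hf
    (p := ENNReal.ofReal p)
  rw [← toReal_eLpNorm hf, ENNReal.toReal_ofReal hp.le, inv_eq_one_div] at hlpNorm
  simpa only [hlpNorm, norm_eq_abs] using ENNReal.toReal_le_of_le_ofReal hC h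

lemma eLpNorm_sqrt_mul_sub_one_le {A B : Ω → ℝ} {p : ℝ≥0∞} (hp : 1 ≤ p)
    (hA : AEStronglyMeasurable A P) (hB : AEStronglyMeasurable B P)
    (hA_nonneg : ∀ ω, 0 ≤ A ω) (hB_nonneg : ∀ ω, 0 ≤ B ω) :
    eLpNorm (fun ω ↦ √(A ω * B ω) - 1) p P
      ≤ eLpNorm (fun ω ↦ A ω - 1) p P + eLpNorm (fun ω ↦ B ω - 1) p P := by
  calc eLpNorm (fun ω ↦ √(A ω * B ω) - 1) p P
      ≤ eLpNorm ((fun ω ↦ |A ω - 1|) + fun ω ↦ |B ω - 1|) p P :=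
        eLpNorm_mono_real fun ω ↦ (abs_sqrt_mul_sub_one_le (hA_nonneg ω) (hB_nonneg ω)).trans
          (max_le_add_of_nonneg (abs_nonneg _) (abs_nonneg _))
    _ ≤ eLpNorm (fun ω ↦ |A ω - 1|) p P + eLpNorm (fun ω ↦ |B ω - 1|) p P :=
        eLpNorm_add_le (by fun_prop) (by fun_prop) hp
    _ = eLpNorm (fun ω ↦ A ω - 1) p P + eLpNorm (fun ω ↦ B ω - 1) p P := by
        simp only [← norm_eq_abs, eLpNorm_norm]

variable [Fintype ι] [Nonempty ι] {G : ι → Ω → ℝ}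

lemma eLpNorm_sq_mean_le {p τ : ℝ} (hG : HasGaussianLaw (fun ω ↦ (G · ω)) P)
    (hmean : ∀ i, P[G i] = 0) (hp : 1 ≤ p) (hτ : 0 < τ)
    (hcov_le : ∀ i j, |cov[G i, G j; P]| ≤ 1)
    (hcov_sum : ∑ i, ∑ j, |cov[G i, G j; P]| ≤ (Fintype.card ι * τ) ^ 2) :
    eLpNorm (fun ω ↦ ((∑ i, G i ω) / Fintype.card ι) ^ 2) (ENNReal.ofReal p) P
      ≤ ENNReal.ofReal ((12 * p + 1) * τ) := by
  have := hG.isProbabilityMeasure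
  have hvar : Var[fun ω ↦ (∑ i, G i ω) / Fintype.card ι; P]
      ≤ (∑ i, ∑ j, |cov[G i, G j; P]|) / (Fintype.card ι : ℝ) ^ 2 := by
    simp only [div_eq_inv_mul, variance_const_mul, inv_pow]
    rw [variance_fun_sum fun i ↦ (hG.eval i).memLp_two]
    gcongr
    exact le_abs_self _
  refine eLpNorm_sq_le_of_hasGaussianLaw ?_ ?_ hp hτ (le_of_le_one_of_le_sq hτ.le ?_ ?_)
  · simpa [div_eq_inv_mul] using hG.fun_sum.fun_smul (Fintype.card ι : ℝ)⁻¹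
  · simp [integral_div, integral_finsetSum _ fun i _ ↦ (hG.eval i).integrable, hmean]
  · refine hvar.trans ((div_le_one (by positivity)).2 ?_)
    calc ∑ i, ∑ j, |cov[G i, G j; P]| ≤ ∑ _i : ι, ∑ _j : ι, 1 := by gcongr; exact hcov_le _ _
      _ = (Fintype.card ι : ℝ) ^ 2 := by simp [sq]
  · exact hvar.trans ((div_le_iff₀ (by positivity)).2 (by linarith))

lemma eLpNorm_mean_sq_sub_variance_le {p τ : ℝ} (hG : HasGaussianLaw (fun ω ↦ (G · ω)) P)
    (hmean : ∀ i, P[G i] = 0) (hp : 1 ≤ p) (hτ : 0 < τ)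
    (hcov_le : ∀ i j, |cov[G i, G j; P]| ≤ 1)
    (hcov_sum : ∑ i, ∑ j, |cov[G i, G j; P]| ≤ (Fintype.card ι * τ) ^ 2) :
    eLpNorm (fun ω ↦ (∑ i, (G i ω ^ 2 - Var[G i; P])) / Fintype.card ι) (ENNReal.ofReal p) P
      ≤ ENNReal.ofReal (12 * p * τ) := by
  have hfrob : ∑ i, ∑ j, cov[G i, G j; P] ^ 2 ≤ (Fintype.card ι * τ) ^ 2 :=
    (sum_le_sum fun i _ ↦ sum_le_sum fun j _ ↦ by
      rw [← sq_abs]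
      exact pow_le_of_le_one (abs_nonneg _) (hcov_le i j) two_ne_zero).trans hcov_sum
  simp only [div_eq_inv_mul]
  calc eLpNorm (fun ω ↦ (Fintype.card ι : ℝ)⁻¹ * ∑ i, (G i ω ^ 2 - Var[G i; P]))
        (ENNReal.ofReal p) P
      = ‖(Fintype.card ι : ℝ)⁻¹‖ₑ
        * eLpNorm (fun ω ↦ ∑ i, (G i ω ^ 2 - Var[G i; P])) (ENNReal.ofReal p) P :=
        eLpNorm_const_smul (Fintype.card ι : ℝ)⁻¹ _ _ _
    _ ≤ ENNReal.ofReal (Fintype.card ι : ℝ)⁻¹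
        * ENNReal.ofReal (12 * p * (Fintype.card ι * τ)) := by
        rw [enorm_of_nonneg (by positivity)]
        gcongr
        exact eLpNorm_sum_sq_sub_variance_le hG hmean hp (by positivity) hfrob
    _ = ENNReal.ofReal (12 * p * τ) := by
        rw [← ENNReal.ofReal_mul (by positivity)]
        field_simp

theorem eLpNorm_empVar_sub_one_le {p τ : ℝ} (hG : HasGaussianLaw (fun ω ↦ (G · ω)) P)
    (hmean : ∀ i, P[G i] = 0) (hp : 1 ≤ p) (hτ : 0 < τ)
    (hcov_le : ∀ i j, |cov[G i, G j; P]| ≤ 1)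
    (hcov_sum : ∑ i, ∑ j, |cov[G i, G j; P]| ≤ (Fintype.card ι * τ) ^ 2)
    (hvar_le : ∀ i, |Var[G i; P] - 1| ≤ 1)
    (hvar_sum : ∑ i, |Var[G i; P] - 1| ≤ Fintype.card ι * τ ^ 2) :
    eLpNorm (fun ω ↦ empVar (G · ω) - 1) (ENNReal.ofReal p) P
      ≤ ENNReal.ofReal ((24 * p + 2) * τ) := by
  have := hG.isProbabilityMeasure
  set N : ℝ := (Fintype.card ι : ℝ) with hN
  have hcard : 0 < N := by rw [hN]; exact_mod_cast Fintype.card_pos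
  have hmeas (i : ι) : AEMeasurable (G i) P := (hG.eval i).aemeasurable
  set bias : ℝ := (∑ i, (Var[G i; P] - 1)) / N
  have hsplit : (fun ω ↦ empVar (G · ω) - 1)
      = (fun ω ↦ (∑ i, (G i ω ^ 2 - Var[G i; P])) / N + bias)
        - fun ω ↦ ((∑ i, G i ω) / N) ^ 2 := by
    ext ω
    simp only [empVar, bias, sum_sub_distrib, Pi.sub_apply, sum_const, card_univ, nsmul_eq_mul,
      ← hN]
    field_simp
    ring
  have hconst : eLpNorm (fun _ ↦ bias) (ENNReal.ofReal p) P ≤ ENNReal.ofReal τ :=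
    (eLpNorm_le_of_ae_bound (ae_of_all _ fun _ ↦
      abs_mean_le_of_sum_abs_le hτ.le hvar_le hvar_sum)).trans_eq (by simp)
  have hp' : 1 ≤ ENNReal.ofReal p := by simpa
  calc eLpNorm (fun ω ↦ empVar (G · ω) - 1) (ENNReal.ofReal p) P
      ≤ eLpNorm (fun ω ↦ (∑ i, (G i ω ^ 2 - Var[G i; P])) / N + bias) (ENNReal.ofReal p) P
        + eLpNorm (fun ω ↦ ((∑ i, G i ω) / N) ^ 2) (ENNReal.ofReal p) P := by
        rw [hsplit]
        exact eLpNorm_sub_le (by fun_prop) (by fun_prop) hp'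
    _ ≤ ENNReal.ofReal (12 * p * τ) + ENNReal.ofReal τ + ENNReal.ofReal ((12 * p + 1) * τ) := by
        gcongr
        · exact (eLpNorm_add_le (by fun_prop) (by fun_prop) hp').trans <|
            add_le_add (eLpNorm_mean_sq_sub_variance_le hG hmean hp hτ hcov_le hcov_sum) hconst
        · exact eLpNorm_sq_mean_le hG hmean hp hτ hcov_le hcov_sum
    _ = ENNReal.ofReal ((24 * p + 2) * τ) := by
        rw [← ENNReal.ofReal_add (by positivity) hτ.le,
          ← ENNReal.ofReal_add (by positivity) (by positivity)]
        ring_nf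

end EmpiricalVariance

section OrnsteinUhlenbeck

/-- The Ornstein–Uhlenbeck process with rate `θ` started at `0`, up to the choice of a modification:
a centred Gaussian process indexed by `[0, ∞)` with the covariance function of the solution of
`dX = -θ X dt + dW`, `X 0 = 0`. Only the finite-dimensional distributions are prescribed; path
continuity is not part of the definition. -/
structure IsOUProcess {Ω : Type*} [MeasurableSpace Ω] (θ : ℝ) (X : ℝ≥0 → Ω → ℝ) (P : Measure Ω) :
    Prop where
  isGaussianProcess : IsGaussianProcess X P
  centered : ∀ t, P[X t] = 0
  covariance_eq : ∀ s t : ℝ≥0,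
    cov[X s, X t; P] = (exp (-θ * |(t : ℝ) - s|) - exp (-θ * (t + s))) / (2 * θ)

theorem IsOUPair.isOUProcess {θ : ℝ} {X : Fin 2 → ℝ → Ω → ℝ} (hX : IsOUPair θ X) (i : Fin 2) :
    IsOUProcess θ (fun t : ℝ≥0 ↦ X i t) ℙ := by
  have hmeas := hX.meas i
  have hcentered (t : ℝ≥0) : ∫ ω, X i t ω = 0 := by
    obtain ⟨v, hv⟩ := hX.gaussian i 1 (fun _ ↦ t) (fun _ ↦ 1) fun _ ↦ t.2
    have hmean := integral_id_gaussianReal (μ := 0) (v := v)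
    rw [← hv, integral_map (by fun_prop) (by fun_prop)] at hmean
    simpa using hmean
  refine ⟨⟨fun I ↦ ⟨isGaussian_of_map_eq_gaussianReal fun L ↦ ⟨0, ?_⟩⟩⟩, hcentered, fun s t ↦ ?_⟩
  · let e := I.equivFin.symm
    obtain ⟨v, hv⟩ := hX.gaussian i I.card (fun j ↦ (e j : ℝ≥0)) (fun j ↦ L (Pi.single (e j) 1))
      fun j ↦ (e j : ℝ≥0).2
    have hL (x : I → ℝ) : L x = ∑ j, L (Pi.single (e j) 1) * x (e j) := by
      rw [e.sum_comp fun t ↦ L (Pi.single t 1) * x t]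
      conv_lhs => rw [pi_eq_sum_univ' x, map_sum]
      simp [mul_comm]
    have hmeas_restrict : Measurable fun ω ↦ I.restrict fun t : ℝ≥0 ↦ X i t ω :=
      measurable_pi_lambda _ fun t ↦ hmeas t
    refine ⟨v, ?_⟩
    rw [Measure.map_map L.continuous.measurable hmeas_restrict, ← hv]
    congr 1
    ext ω
    exact hL _
  · simp only [covariance, hcentered, sub_zero]
    exact hX.cov i s t s.2 t.2

lemma div_one_add_le_one_sub_exp_neg {x : ℝ} (hx : 0 ≤ x) : x / (1 + x) ≤ 1 - exp (-x) := by
  have hexp : exp (-x) ≤ (1 + x)⁻¹ := by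
    rw [exp_neg]
    exact inv_anti₀ (by positivity) (by linarith [add_one_le_exp x])
  have : x / (1 + x) = 1 - (1 + x)⁻¹ := by field_simp; ring
  linarith

lemma abs_natCast_mul_sub_natCast_mul (j k : ℕ) {D : ℝ} (hD : 0 ≤ D) :
    |k * D - j * D| = j.dist k * D := by
  rw [← sub_mul, abs_mul, abs_of_nonneg hD, abs_sub_comm]
  congr 1
  rcases le_total j k with h | h
  · rw [Nat.dist_eq_sub_of_le h, Nat.cast_sub h, abs_sub_comm, abs_of_nonneg (by simpa)]
  · rw [Nat.dist_eq_sub_of_le_right h, Nat.cast_sub h, abs_of_nonneg (by simpa)]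

namespace IsOUProcess

variable {Ω : Type*} [MeasurableSpace Ω] {P : Measure Ω} {θ : ℝ} {X : ℝ≥0 → Ω → ℝ}

lemma hasGaussianLaw_const_mul_grid (hX : IsOUProcess θ X P) (c : ℝ) (D : ℝ≥0) (n : ℕ) :
    HasGaussianLaw (fun ω (k : Fin n) ↦ c * X (k * D) ω) P := by
  let grid : Finset ℝ≥0 := univ.image fun k : Fin n ↦ (k : ℝ≥0) * D
  let L : (grid → ℝ) →L[ℝ] Fin n → ℝ :=
    .pi fun k ↦ c • .proj ⟨k * D, mem_image_of_mem _ (mem_univ k)⟩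
  exact (hX.isGaussianProcess.hasGaussianLaw grid).map_fun L

lemma covariance_sqrt_mul_grid (hX : IsOUProcess θ X P) (hθ : 0 < θ) (D : ℝ≥0) (j k : ℕ) :
    cov[fun ω ↦ √(2 * θ) * X (j * D) ω, fun ω ↦ √(2 * θ) * X (k * D) ω; P]
      = exp (-(θ * D)) ^ j.dist k - exp (-(θ * D)) ^ (j + k) := by
  rw [covariance_const_mul_left, covariance_const_mul_right, hX.covariance_eq, ← mul_assoc,
    mul_self_sqrt (by positivity), mul_div_cancel₀ _ (by positivity)]
  push_cast
  rw [abs_natCast_mul_sub_natCast_mul j k D.coe_nonneg, ← exp_nat_mul, ← exp_nat_mul]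
  push_cast
  ring_nf

theorem eLpNorm_empVar_sub_one_le (hX : IsOUProcess θ X P) (hθ : 0 < θ) {p : ℝ} (hp : 1 ≤ p)
    {n : ℕ} [NeZero n] {D : ℝ≥0} (hD : 0 < D) :
    eLpNorm (fun ω ↦ empVar (fun k : Fin n ↦ √(2 * θ) * X (k * D) ω) - 1) (ENNReal.ofReal p) P
      ≤ ENNReal.ofReal ((24 * p + 2) * √(2 / (n * (1 - exp (-(θ * D)))))) := by
  set r : ℝ := exp (-(θ * D))
  set G : Fin n → Ω → ℝ := fun k ω ↦ √(2 * θ) * X (k * D) ω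
  have hG : HasGaussianLaw (fun ω ↦ (G · ω)) P := hX.hasGaussianLaw_const_mul_grid _ D n
  have hr0 : 0 ≤ r := exp_nonneg _
  have hr1 : r < 1 := by simp only [r, exp_lt_one_iff, neg_lt_zero]; positivity
  have hn : (0 : ℝ) < n := by exact_mod_cast NeZero.pos n
  have hτ : 0 < 2 / (n * (1 - r)) := div_pos two_pos (mul_pos hn (by linarith))
  have hcov (j k : Fin n) : cov[G j, G k; P] = r ^ (j : ℕ).dist k - r ^ (j + k : ℕ) :=
    hX.covariance_sqrt_mul_grid hθ D j k
  have hcov_abs (j k : Fin n) : |cov[G j, G k; P]| ≤ r ^ (j : ℕ).dist k := by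
    have : r ^ (j + k : ℕ) ≤ r ^ (j : ℕ).dist k :=
      pow_le_pow_of_le_one hr0 hr1.le (by unfold Nat.dist; lia)
    rw [hcov, abs_of_nonneg (by linarith)]
    linarith [pow_nonneg hr0 (j + k : ℕ)]
  have hvar (k : Fin n) : |Var[G k; P] - 1| = r ^ (k + k : ℕ) := by
    rw [← covariance_self (hG.eval k).aemeasurable, hcov]
    simp [abs_of_nonneg, hr0]
  refine _root_.eLpNorm_empVar_sub_one_le hG (fun k ↦ ?_) hp (sqrt_pos.2 hτ) (fun j k ↦ ?_) ?_
    (fun k ↦ ?_) ?_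
  · simp [integral_const_mul, hX.centered]
  · exact (hcov_abs j k).trans (pow_le_one₀ hr0 hr1.le)
  · calc ∑ j, ∑ k, |cov[G j, G k; P]| ≤ n * (2 / (1 - r)) :=
          (sum_le_sum fun j _ ↦ sum_le_sum fun k _ ↦ hcov_abs j k).trans
            (sum_sum_pow_dist_le hr0 hr1 n)
      _ = (Fintype.card (Fin n) * √(2 / (n * (1 - r)))) ^ 2 := by
          rw [mul_pow, sq_sqrt hτ.le, Fintype.card_fin]
          field_simp
  · exact (hvar k).trans_le (pow_le_one₀ hr0 hr1.le)
  · calc ∑ k, |Var[G k; P] - 1| ≤ ∑ k : Fin n, r ^ (k : ℕ) :=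
          sum_le_sum fun k _ ↦ (hvar k).trans_le (pow_le_pow_of_le_one hr0 hr1.le (by simp))
      _ ≤ (1 - r)⁻¹ := (Fin.sum_univ_eq_sum_range (r ^ ·) n).trans_le (geom_sum_le_inv hr0 hr1 n)
      _ ≤ 2 * (1 - r)⁻¹ := by linarith [inv_nonneg.2 (sub_nonneg.2 hr1.le)]
      _ = Fintype.card (Fin n) * √(2 / (n * (1 - r))) ^ 2 := by
          rw [sq_sqrt hτ.le, Fintype.card_fin]
          field_simp

theorem integral_abs_sqrt_empVar_mul_empVar_sub_one_rpow_le {Y : ℝ≥0 → Ω → ℝ}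
    (hX : IsOUProcess θ X P) (hY : IsOUProcess θ Y P) (hθ : 0 < θ) {p : ℝ} (hp : 1 ≤ p)
    {n : ℕ} [NeZero n] {D : ℝ≥0} (hD : 0 < D) :
    (∫ ω, |√(empVar (fun k : Fin n ↦ √(2 * θ) * X (k * D) ω)
        * empVar (fun k : Fin n ↦ √(2 * θ) * Y (k * D) ω)) - 1| ^ p ∂P) ^ (1 / p)
      ≤ (48 * p + 4) * √(2 / (n * (1 - exp (-(θ * D))))) := by
  have hempVar_meas {Z : ℝ≥0 → Ω → ℝ} (hZ : IsOUProcess θ Z P) :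
      AEStronglyMeasurable (fun ω ↦ empVar fun k : Fin n ↦ √(2 * θ) * Z (k * D) ω) P :=
    (measurable_empVar.comp_aemeasurable
      (hZ.hasGaussianLaw_const_mul_grid _ D n).aemeasurable).aestronglyMeasurable
  have hX_meas := hempVar_meas hX
  have hY_meas := hempVar_meas hY
  refine integral_abs_rpow_le_of_eLpNorm_le (by positivity) (by positivity)
    (by fun_prop) ((eLpNorm_sqrt_mul_sub_one_le (by simpa) hX_meas hY_meas
      (fun _ ↦ empVar_nonneg _) fun _ ↦ empVar_nonneg _).trans ?_)
  refine (add_le_add (hX.eLpNorm_empVar_sub_one_le hθ hp hD)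
    (hY.eLpNorm_empVar_sub_one_le hθ hp hD)).trans_eq ?_
  rw [← ENNReal.ofReal_add (by positivity) (by positivity)]
  ring_nf

end IsOUProcess

lemma two_div_mul_one_sub_exp_neg_le {θ D D₀ n : ℝ} (hθ : 0 < θ) (hD : 0 < D) (hD_le : D ≤ D₀)
    (hn : 0 < n) :
    2 / (n * (1 - exp (-(θ * D)))) ≤ 2 * (1 + θ * D₀) / θ / (n * D) := by
  have hfrac : θ * D / (1 + θ * D₀) ≤ 1 - exp (-(θ * D)) := by
    refine le_trans ?_ (div_one_add_le_one_sub_exp_neg (by positivity))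
    gcongr
  have hD₀ : 0 < D₀ := hD.trans_le hD_le
  calc 2 / (n * (1 - exp (-(θ * D)))) ≤ 2 / (n * (θ * D / (1 + θ * D₀))) := by gcongr
    _ = 2 * (1 + θ * D₀) / θ / (n * D) := by field_simp

lemma ouYtilde_div_eq_empVar {Ω : Type} (X : Fin 2 → ℝ → Ω → ℝ) (i : Fin 2) (n : ℕ) {D : ℝ}
    (hD : D ≠ 0) (ω : Ω) :
    ouYtilde X i i n D ω / (n * D) = empVar fun k : Fin n ↦ X i (k * D) ω := by
  rcases eq_or_ne n 0 with rfl | hn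
  · simp [empVar]
  simp only [ouYtilde, ouXtilde, empVar, Fintype.card_fin, sum_range, ← sq]
  field_simp

theorem stmt_16_general {θ p D D₀ : ℝ} {n : ℕ} {X : Fin 2 → ℝ → Ω → ℝ} (hθ : 0 < θ) (hp : 1 ≤ p)
    (hX : ∀ i, IsOUProcess θ (fun t : ℝ≥0 ↦ X i t) ℙ) (hn : n ≠ 0) (hD : 0 < D) (hD_le : D ≤ D₀) :
    (∫ ω, |2 * θ * √((ouYtilde X 0 0 n D ω / (n * D)) * (ouYtilde X 1 1 n D ω / (n * D))) - 1| ^ p)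
        ^ (1 / p) ≤ (48 * p + 4) * √(2 * (1 + θ * D₀) / θ) / √(n * D) := by
  have : NeZero n := ⟨hn⟩
  lift D to ℝ≥0 using hD.le
  have hnormalize (ω : Ω) :
      2 * θ * √((ouYtilde X 0 0 n D ω / (n * D)) * (ouYtilde X 1 1 n D ω / (n * D)))
        = √(empVar (fun k : Fin n ↦ √(2 * θ) * X 0 (k * D) ω)
            * empVar (fun k : Fin n ↦ √(2 * θ) * X 1 (k * D) ω)) := by
    rw [empVar_const_mul, empVar_const_mul, sq_sqrt (by positivity), mul_mul_mul_comm,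
      sqrt_mul (mul_self_nonneg _), sqrt_mul_self (by positivity),
      ouYtilde_div_eq_empVar X 0 n hD.ne', ouYtilde_div_eq_empVar X 1 n hD.ne']
  simp only [hnormalize]
  calc _ ≤ (48 * p + 4) * √(2 / (n * (1 - exp (-(θ * D))))) := by
        exact_mod_cast (hX 0).integral_abs_sqrt_empVar_mul_empVar_sub_one_rpow_le (hX 1) hθ hp
          (n := n) (by exact_mod_cast hD)
    _ ≤ (48 * p + 4) * √(2 * (1 + θ * D₀) / θ / (n * D)) := by
        gcongr ?_ * √?_
        exact two_div_mul_one_sub_exp_neg_le hθ hD hD_le (by positivity)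
    _ = (48 * p + 4) * √(2 * (1 + θ * D₀) / θ) / √(n * D) := by
        rw [sqrt_div' _ (by positivity), ← mul_div_assoc]

end OrnsteinUhlenbeck

/-- if `Δₙ → 0` and `nΔₙ → ∞`, then for every `p ≥ 1` there are
`c(p,θ) > 0` and `n₀` such that for all `n ≥ n₀`,
`(E[|2θ·√((Ỹ₁₁(n)/Tₙ)·(Ỹ₂₂(n)/Tₙ)) − 1|^p])^{1/p} ≤ c(p,θ)·Tₙ^{−1/2}`. -/
theorem stmt_16 (θ : ℝ) (hθ : 0 < θ) (p : ℝ) (hp : 1 ≤ p)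
    [IsProbabilityMeasure (ℙ : Measure Ω)]
    (X : Fin 2 → ℝ → Ω → ℝ) (hX : IsOUPair θ X)
    (Δ : ℕ → ℝ) (hΔpos : ∀ n, 0 < Δ n) (hΔ0 : Tendsto Δ atTop (𝓝 0))
    (hT : Tendsto (fun n : ℕ => (n : ℝ) * Δ n) atTop atTop) :
    ∃ c : ℝ, 0 < c ∧ ∃ n₀ : ℕ, ∀ n : ℕ, n₀ ≤ n →
      (∫ ω, |2 * θ * Real.sqrt ((ouYtilde X 0 0 n (Δ n) ω / ((n : ℝ) * Δ n))
              * (ouYtilde X 1 1 n (Δ n) ω / ((n : ℝ) * Δ n))) - 1| ^ p ∂ℙ) ^ (1 / p)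
        ≤ c / Real.sqrt ((n : ℝ) * Δ n) := by
  obtain ⟨D₀, hD₀⟩ := hΔ0.bddAbove_range
  have hΔ_le (n : ℕ) : Δ n ≤ D₀ := hD₀ (Set.mem_range_self n)
  have hD₀_pos : 0 < D₀ := (hΔpos 0).trans_le (hΔ_le 0)
  exact ⟨(48 * p + 4) * √(2 * (1 + θ * D₀) / θ), by positivity, 1, fun n hn ↦
    stmt_16_general hθ hp hX.isOUProcess (by lia) (hΔpos n) (hΔ_le n)⟩

end
end
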